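/- arXiv:1407.5518 — 2 statements merged into one kernel-verified Lean document; each statement's English description precedes it below -/
import Mathlib

section
/- Let Ω ⊂ ℝ^n be an open bounded convex domain with boundary ∂Ω of class C^2. Then for every u ∈ W^{1,p}_0(Ω), ∫_Ω |∇u(x)|^p dx ≥ C_p ∫_Ω |u(x)|^p/δ(x)^p dx + (p-1)·C_p·R_in^{-p} ∫_Ω |u(x)|^p dx. -/
open MeasureTheory Metric Set Filter Bornology
open scoped ENNReal Topology

noncomputable section

namespace RobinHardy

/-- Distance to the boundary of `Ω`. -/
def sdist {n : ℕ} (Ω : Set (EuclideanSpace ℝ (Fin n))) (x : EuclideanSpace ℝ (Fin n)) : ℝ :=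
  Metric.infDist x (frontier Ω)

/-- The in-radius of `Ω`, i.e. `sup_{x ∈ Ω} dist(x, ∂Ω)`. -/
def inradius {n : ℕ} (Ω : Set (EuclideanSpace ℝ (Fin n))) : ℝ :=
  sSup (sdist Ω '' Ω)

/-- The surface measure on `∂Ω`: the `(n-1)`-dimensional Hausdorff measure restricted
to the boundary of `Ω`. -/
def surf {n : ℕ} (Ω : Set (EuclideanSpace ℝ (Fin n))) :
    Measure (EuclideanSpace ℝ (Fin n)) :=
  (Measure.hausdorffMeasure ((n : ℝ) - 1)).restrict (frontier Ω)

/-- `Ω` has boundary of class `C²`: near every boundary point, `Ω` is a sublevel set of a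
`C²` function with non-vanishing differential. -/
def HasC2Boundary {n : ℕ} (Ω : Set (EuclideanSpace ℝ (Fin n))) : Prop :=
  ∀ x ∈ frontier Ω, ∃ (U : Set (EuclideanSpace ℝ (Fin n)))
    (f : EuclideanSpace ℝ (Fin n) → ℝ), IsOpen U ∧ x ∈ U ∧ ContDiff ℝ 2 f ∧
      (∀ y ∈ U, fderiv ℝ f y ≠ 0) ∧ Ω ∩ U = {y ∈ U | f y < 0} ∧
      frontier Ω ∩ U = {y ∈ U | f y = 0}

/-- Membership in `W^{1,p}(Ω)`, realized via functions continuous up to the boundary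
(providing the boundary trace), differentiable in `Ω`, with finite `L^p`-integrals of the
function and of its gradient. -/
def MemW1p {n : ℕ} (p : ℝ) (Ω : Set (EuclideanSpace ℝ (Fin n)))
    (u : EuclideanSpace ℝ (Fin n) → ℝ) : Prop :=
  ContinuousOn u (closure Ω) ∧ (∀ x ∈ Ω, DifferentiableAt ℝ u x) ∧
    (∫⁻ x in Ω, ENNReal.ofReal (|u x| ^ p)) ≠ ∞ ∧
    (∫⁻ x in Ω, ENNReal.ofReal (‖fderiv ℝ u x‖ ^ p)) ≠ ∞

/-- The `p`-th power of the `W^{1,p}(Ω)`-distance between two functions. -/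
def W1pDist {n : ℕ} (p : ℝ) (Ω : Set (EuclideanSpace ℝ (Fin n)))
    (u v : EuclideanSpace ℝ (Fin n) → ℝ) : ℝ≥0∞ :=
  (∫⁻ x in Ω, ENNReal.ofReal (|u x - v x| ^ p)) +
    ∫⁻ x in Ω, ENNReal.ofReal (‖fderiv ℝ u x - fderiv ℝ v x‖ ^ p)

/-- Membership in `W^{1,p}_{0,Γ}(Ω)`: the closure, in the `W^{1,p}(Ω)`-norm, of the set of
`C¹` functions vanishing on `Γ`. -/
def MemW1pGamma {n : ℕ} (p : ℝ) (Ω Γ : Set (EuclideanSpace ℝ (Fin n)))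
    (u : EuclideanSpace ℝ (Fin n) → ℝ) : Prop :=
  MemW1p p Ω u ∧ ∃ v : ℕ → EuclideanSpace ℝ (Fin n) → ℝ,
    (∀ j, ContDiff ℝ 1 (v j)) ∧ (∀ j, ∀ x ∈ Γ, v j x = 0) ∧
      Tendsto (fun j => W1pDist p Ω (v j) u) atTop (𝓝 0)

/-- Membership in `W^{1,p}_0(Ω)`: the closure of `C_c^∞(Ω)` in the `W^{1,p}(Ω)`-norm. -/
def MemW1p0 {n : ℕ} (p : ℝ) (Ω : Set (EuclideanSpace ℝ (Fin n)))
    (u : EuclideanSpace ℝ (Fin n) → ℝ) : Prop :=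
  MemW1p p Ω u ∧ ∃ v : ℕ → EuclideanSpace ℝ (Fin n) → ℝ,
    (∀ j, ContDiff ℝ (⊤ : ℕ∞) (v j) ∧ HasCompactSupport (v j) ∧ tsupport (v j) ⊆ Ω) ∧
      Tendsto (fun j => W1pDist p Ω (v j) u) atTop (𝓝 0)

/-- The class `Σ_Γ` of boundary functions: `σ = +∞` on `Γ` and `σ` essentially bounded
on `∂Ω \ cl(Γ)`. -/
def SigmaGamma {n : ℕ} (Ω Γ : Set (EuclideanSpace ℝ (Fin n)))
    (σ : EuclideanSpace ℝ (Fin n) → ℝ≥0∞) : Prop :=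
  (∀ y ∈ Γ, σ y = ∞) ∧
    essSup σ ((surf Ω).restrict (frontier Ω \ closure Γ)) ≠ ∞

/-- `α(x) = ((p-1)/p)·σ(π(x))^{1/(1-p)}`, where `π` is a nearest-point projection onto `∂Ω`
(with the conventions `α(x) = 0` when `σ(π(x)) = ∞` and `α(x) = ∞` when `σ(π(x)) = 0`,
built into the `ℝ≥0∞`-valued power). -/
def alphaF {n : ℕ} (p : ℝ) (σ : EuclideanSpace ℝ (Fin n) → ℝ≥0∞)
    (π : EuclideanSpace ℝ (Fin n) → EuclideanSpace ℝ (Fin n))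
    (x : EuclideanSpace ℝ (Fin n)) : ℝ≥0∞ :=
  ENNReal.ofReal ((p - 1) / p) * σ (π x) ^ (1 / (1 - p))

/-- The weighted norm `‖u‖_{p,σ}^p = ∫_Ω |u(x)|^p/(δ(x)+α(x))^p dx`. -/
def wnorm {n : ℕ} (p : ℝ) (Ω : Set (EuclideanSpace ℝ (Fin n)))
    (σ : EuclideanSpace ℝ (Fin n) → ℝ≥0∞)
    (π : EuclideanSpace ℝ (Fin n) → EuclideanSpace ℝ (Fin n))
    (u : EuclideanSpace ℝ (Fin n) → ℝ) : ℝ≥0∞ :=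
  ∫⁻ x in Ω, ENNReal.ofReal (|u x| ^ p) /
    (ENNReal.ofReal (sdist Ω x) + alphaF p σ π x) ^ p

/-- The Robin functional `Q_p[σ,u] = ∫_Ω |∇u|^p dx + ∫_{∂Ω} σ|u|^p dν`, the boundary
integral being taken over the set where `σ` is finite. -/
def Qp {n : ℕ} (p : ℝ) (Ω : Set (EuclideanSpace ℝ (Fin n)))
    (σ : EuclideanSpace ℝ (Fin n) → ℝ≥0∞)
    (u : EuclideanSpace ℝ (Fin n) → ℝ) : ℝ≥0∞ :=
  (∫⁻ x in Ω, ENNReal.ofReal (‖fderiv ℝ u x‖ ^ p)) +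
    ∫⁻ y in frontier Ω ∩ {y | σ y ≠ ∞}, σ y * ENNReal.ofReal (|u y| ^ p) ∂(surf Ω)

/-- The variational quantity `λ_p(Ω,σ) = inf { Q_p[σ,u]/‖u‖_{p,σ}^p : u ∈ W^{1,p}_{0,Γ}(Ω), u ≠ 0 }`. -/
def lam {n : ℕ} (p : ℝ) (Ω Γ : Set (EuclideanSpace ℝ (Fin n)))
    (σ : EuclideanSpace ℝ (Fin n) → ℝ≥0∞)
    (π : EuclideanSpace ℝ (Fin n) → EuclideanSpace ℝ (Fin n)) : ℝ≥0∞ :=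
  ⨅ (u : EuclideanSpace ℝ (Fin n) → ℝ) (_ : MemW1pGamma p Ω Γ u)
    (_ : wnorm p Ω σ π u ≠ 0), Qp p Ω σ u / wnorm p Ω σ π u

/-- The variational quantity `λ_p(Ω,σ)` with the infimum over all of `W^{1,p}(Ω)`. -/
def lamAll {n : ℕ} (p : ℝ) (Ω : Set (EuclideanSpace ℝ (Fin n)))
    (σ : EuclideanSpace ℝ (Fin n) → ℝ≥0∞)
    (π : EuclideanSpace ℝ (Fin n) → EuclideanSpace ℝ (Fin n)) : ℝ≥0∞ :=
  ⨅ (u : EuclideanSpace ℝ (Fin n) → ℝ) (_ : MemW1p p Ω u)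
    (_ : wnorm p Ω σ π u ≠ 0), Qp p Ω σ u / wnorm p Ω σ π u

/-- `α = ((p-1)/p)·σ^{1/(1-p)}` for a constant boundary parameter `σ > 0`. -/
def alphaC (p σ : ℝ) : ℝ := ((p - 1) / p) * σ ^ (1 / (1 - p))

/-- `‖u‖_{p,σ}^p` for a constant boundary parameter `σ`. -/
def wnormC {n : ℕ} (p : ℝ) (Ω : Set (EuclideanSpace ℝ (Fin n))) (σ : ℝ)
    (u : EuclideanSpace ℝ (Fin n) → ℝ) : ℝ≥0∞ :=
  ∫⁻ x in Ω, ENNReal.ofReal (|u x| ^ p / (sdist Ω x + alphaC p σ) ^ p)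

/-- `Q_p[σ,u]` for a constant boundary parameter `σ`. -/
def QpC {n : ℕ} (p : ℝ) (Ω : Set (EuclideanSpace ℝ (Fin n))) (σ : ℝ)
    (u : EuclideanSpace ℝ (Fin n) → ℝ) : ℝ≥0∞ :=
  (∫⁻ x in Ω, ENNReal.ofReal (‖fderiv ℝ u x‖ ^ p)) +
    ENNReal.ofReal σ * ∫⁻ y, ENNReal.ofReal (|u y| ^ p) ∂(surf Ω)

/-- `λ_p(Ω,σ)` for a constant boundary parameter `σ`. -/
def lamC {n : ℕ} (p : ℝ) (Ω : Set (EuclideanSpace ℝ (Fin n))) (σ : ℝ) : ℝ≥0∞ :=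
  ⨅ (u : EuclideanSpace ℝ (Fin n) → ℝ) (_ : MemW1p p Ω u)
    (_ : wnormC p Ω σ u ≠ 0), QpC p Ω σ u / wnormC p Ω σ u

lemma frontier_ne {n : ℕ} (hn : 1 ≤ n) {Ω : Set (EuclideanSpace ℝ (Fin n))}
    (hbd : IsBounded Ω) : Ω ≠ univ := by
  intro h
  have : Nonempty (Fin n) := ⟨⟨0, hn⟩⟩
  have : Nontrivial (EuclideanSpace ℝ (Fin n)) := inferInstance
  exact NormedSpace.unbounded_univ ℝ (EuclideanSpace ℝ (Fin n)) (h ▸ hbd)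

lemma sdist_lip {n : ℕ} (Ω : Set (EuclideanSpace ℝ (Fin n))) : LipschitzWith 1 (sdist Ω) :=
  Metric.lipschitz_infDist_pt _

lemma exists_near {n : ℕ} {Ω : Set (EuclideanSpace ℝ (Fin n))} (hΩ : IsOpen Ω)
    (hne : Ω ≠ univ) {x : EuclideanSpace ℝ (Fin n)} (hx : x ∈ Ω) :
    ∃ y ∈ frontier Ω, sdist Ω x = dist x y ∧ sdist Ω x = infDist x Ωᶜ := by
  obtain ⟨y, hy, h⟩ := exists_mem_frontier_infDist_compl_eq_dist hx hne
  have h1 : sdist Ω x ≤ dist x y := infDist_le_dist_of_mem hy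
  have h2 : infDist x Ωᶜ ≤ sdist Ω x := by
    apply infDist_le_infDist_of_subset _ ⟨y, hy⟩
    rw [hΩ.frontier_eq]
    exact fun z hz => hz.2
  exact ⟨y, hy, by linarith, by linarith⟩

lemma sdist_pos {n : ℕ} {Ω : Set (EuclideanSpace ℝ (Fin n))} (hΩ : IsOpen Ω)
    (hne : Ω ≠ univ) {x : EuclideanSpace ℝ (Fin n)} (hx : x ∈ Ω) : 0 < sdist Ω x := by
  obtain ⟨y, hy, h, -⟩ := exists_near hΩ hne hx
  rw [h, dist_pos]
  rintro rfl
  rw [hΩ.frontier_eq] at hy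
  exact hy.2 hx

lemma sdist_concave {n : ℕ} {Ω : Set (EuclideanSpace ℝ (Fin n))} (hΩ : IsOpen Ω)
    (hne : Ω ≠ univ) (hconv : Convex ℝ Ω) : ConcaveOn ℝ Ω (sdist Ω) := by
  refine ⟨hconv, ?_⟩
  intro x hx y hy a b ha hb hab
  have hz := hconv hx hy ha hb hab
  have hbx : ∀ x ∈ Ω, ball x (sdist Ω x) ⊆ Ω := by
    intro x hx
    obtain ⟨_, -, -, h⟩ := exists_near hΩ hne hx
    rw [h]; exact ball_infDist_compl_subset
  have hpx := sdist_pos hΩ hne hx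
  have hpy := sdist_pos hΩ hne hy
  set r := a * sdist Ω x + b * sdist Ω y with hr
  have hrpos : 0 < r := by
    rcases ha.eq_or_lt with h | h
    · have : b = 1 := by linarith
      rw [hr, ← h, this]; linarith
    · have := mul_pos h hpx
      have := mul_nonneg hb hpy.le
      linarith
  have hball : ball (a • x + b • y) r ⊆ Ω := by
    intro z hz
    set w := r⁻¹ • (z - (a • x + b • y)) with hw
    have hwn : ‖w‖ < 1 := by
      rw [mem_ball, dist_eq_norm] at hz
      rw [hw, norm_smul, norm_inv, Real.norm_of_nonneg hrpos.le, inv_mul_lt_iff₀ hrpos]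
      linarith
    have hk : ∀ x ∈ Ω, x + sdist Ω x • w ∈ Ω := by
      intro x hx
      have hp := sdist_pos hΩ hne hx
      apply hbx x hx
      rw [mem_ball, dist_eq_norm, add_sub_cancel_left, norm_smul, Real.norm_of_nonneg hp.le]
      nlinarith
    have := hconv (hk x hx) (hk y hy) ha hb hab
    convert this using 1
    have : z = (a • x + b • y) + r • w := by
      rw [hw, smul_smul, mul_inv_cancel₀ hrpos.ne', one_smul]; abel
    rw [this, hr]
    module
  obtain ⟨y0, hy0, h, -⟩ := exists_near hΩ hne hz
  simp only [smul_eq_mul]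
  rw [h]
  by_contra hlt
  push Not at hlt
  rw [hΩ.frontier_eq] at hy0
  apply hy0.2
  apply hball
  rw [mem_ball, dist_comm]
  exact hlt

lemma sdist_grad {n : ℕ} {Ω : Set (EuclideanSpace ℝ (Fin n))} (hΩ : IsOpen Ω)
    (hne : Ω ≠ univ) {x : EuclideanSpace ℝ (Fin n)} (hx : x ∈ Ω)
    (hd : DifferentiableAt ℝ (sdist Ω) x) : ‖fderiv ℝ (sdist Ω) x‖ = 1 := by
  apply le_antisymm
  · simpa using norm_fderiv_le_of_lipschitz ℝ (sdist_lip Ω) (x₀ := x)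
  obtain ⟨y, hy, h, -⟩ := exists_near hΩ hne hx
  have hp := sdist_pos hΩ hne hx
  have h1 := (hd.hasFDerivAt.hasLineDerivAt (y - x)).tendsto_slope_zero_right
  have h2 : fderiv ℝ (sdist Ω) x (y - x) ≤ - sdist Ω x := by
    apply le_of_tendsto h1
    filter_upwards [Ioo_mem_nhdsGT (zero_lt_one (α := ℝ))] with t ht
    have : sdist Ω (x + t • (y - x)) ≤ (1 - t) * sdist Ω x := by
      calc _ ≤ dist (x + t • (y - x)) y := infDist_le_dist_of_mem hy
        _ = ‖(1 - t) • (x - y)‖ := by rw [dist_eq_norm]; congr 1; module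
        _ = _ := by
          rw [norm_smul, Real.norm_of_nonneg (by linarith [ht.2]), h, dist_eq_norm]
    rw [smul_eq_mul, inv_mul_le_iff₀ ht.1]
    linarith
  have h3 : ‖y - x‖ = sdist Ω x := by rw [h, dist_comm, dist_eq_norm]
  have h4 := (fderiv ℝ (sdist Ω) x).le_opNorm (y - x)
  rw [h3, Real.norm_eq_abs] at h4
  have h5 := neg_abs_le (fderiv ℝ (sdist Ω) x (y - x))
  nlinarith

lemma deriv_mono {n : ℕ} {Ω : Set (EuclideanSpace ℝ (Fin n))} {D : EuclideanSpace ℝ (Fin n) → ℝ}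
    (hD : ConcaveOn ℝ Ω D) {x y : EuclideanSpace ℝ (Fin n)} (hx : x ∈ Ω) (hy : y ∈ Ω)
    (hdx : DifferentiableAt ℝ D x) :
    D y ≤ D x + fderiv ℝ D x (y - x) := by
  have h1 := (hdx.hasFDerivAt.hasLineDerivAt (y - x)).tendsto_slope_zero_right
  have : D y - D x ≤ fderiv ℝ D x (y - x) := by
    apply ge_of_tendsto h1
    filter_upwards [Ioo_mem_nhdsGT (zero_lt_one (α := ℝ))] with t ht
    have := hD.2 hx hy (show (0:ℝ) ≤ 1 - t by linarith [ht.2]) ht.1.le (by ring)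
    rw [smul_eq_mul, le_inv_mul_iff₀ ht.1]
    have e : x + t • (y - x) = (1 - t) • x + t • y := by module
    rw [e]
    simp only [smul_eq_mul] at this
    linarith
  linarith

lemma weak_super {n : ℕ} {Ω : Set (EuclideanSpace ℝ (Fin n))} (hΩ : IsOpen Ω)
    (hbd : IsBounded Ω) {D f : EuclideanSpace ℝ (Fin n) → ℝ} {C C' : NNReal}
    (hD : ConcaveOn ℝ Ω D) (hDl : LipschitzWith C D) (hf : LipschitzWith C' f)
    (hf0 : ∀ x, 0 ≤ f x) (hfc : HasCompactSupport f) (hfs : tsupport f ⊆ Ω)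
    (v : EuclideanSpace ℝ (Fin n)) :
    0 ≤ ∫ x in Ω, lineDeriv ℝ f x v * lineDeriv ℝ D x v := by
  set g := Ω.indicator (fun x => lineDeriv ℝ D x v) with hg
  have hgi : Integrable g := by
    rw [hg, integrable_indicator_iff hΩ.measurableSet]
    refine IntegrableOn.of_bound hbd.measure_lt_top
      ((measurable_lineDeriv hDl.continuous).aestronglyMeasurable) (C * ‖v‖) ?_
    exact Eventually.of_forall fun x => norm_lineDeriv_le_of_lipschitz ℝ hDl
  have key := hf.integral_inv_smul_sub_mul_tendsto_integral_lineDeriv_mul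
    (μ := volume) hgi v
  have e : ∫ x in Ω, lineDeriv ℝ f x v * lineDeriv ℝ D x v = ∫ x, lineDeriv ℝ f x v * g x := by
    rw [← integral_indicator hΩ.measurableSet]
    congr 1; ext x
    by_cases hx : x ∈ Ω <;> simp [hg, hx]
  rw [e]
  apply ge_of_tendsto key
  obtain ⟨r, hr, hrs⟩ := hfc.isCompact.exists_thickening_subset_open hΩ hfs
  have hev : ∀ᶠ t : ℝ in 𝓝[>] 0, t * ‖v‖ < r := by
    have : Tendsto (fun t : ℝ => t * ‖v‖) (𝓝[>] 0) (𝓝 (0 * ‖v‖)) :=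
      (Continuous.tendsto (by fun_prop) 0).mono_left nhdsWithin_le_nhds
    rw [zero_mul] at this
    exact this.eventually (gt_mem_nhds hr)
  filter_upwards [hev, self_mem_nhdsWithin] with t ht1 (ht : 0 < t)
  obtain ⟨M, hM⟩ := hfc.exists_bound_of_continuous hf.continuous
  have i1 : Integrable (fun x => f x * g x) :=
    hgi.bdd_mul (c := M) hf.continuous.aestronglyMeasurable (Eventually.of_forall hM)
  have i2 : Integrable (fun x => f (x + t • v) * g x) :=
    hgi.bdd_mul (c := M) (hf.continuous.comp (by fun_prop)).aestronglyMeasurable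
      (Eventually.of_forall fun x => hM _)
  have i3 : Integrable (fun x => f x * g (x + t • (-v))) :=
    (hgi.comp_add_right (t • (-v))).bdd_mul (c := M) hf.continuous.aestronglyMeasurable
      (Eventually.of_forall hM)
  have S3 : ∫ x, f (x + t • v) * g x = ∫ x, f x * g (x + t • (-v)) := by
    rw [← integral_add_right_eq_self _ (t • (-v))]; simp
  have : ∫ x, (t⁻¹ • (f (x + t • v) - f x)) * g x = t⁻¹ * ∫ x, f x * (g (x + t • (-v)) - g x) := by
    simp only [smul_eq_mul, mul_assoc, integral_const_mul]
    congr 1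
    simp_rw [sub_mul, mul_sub]
    rw [integral_sub i2 i1, integral_sub i3 i1, S3]
  rw [this]
  apply mul_nonneg (inv_nonneg.2 ht.le)
  apply integral_nonneg_of_ae
  have hae : ∀ᵐ x : EuclideanSpace ℝ (Fin n), DifferentiableAt ℝ D x := hDl.ae_differentiableAt
  have hae2 : ∀ᵐ x : EuclideanSpace ℝ (Fin n), DifferentiableAt ℝ D (x + t • (-v)) :=
    (measurePreserving_add_right volume (t • (-v))).quasiMeasurePreserving.ae hae
  filter_upwards [hae, hae2] with x h1 h2
  by_cases hx : x ∈ tsupport f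
  · have hxΩ := hfs hx
    have hyΩ : x + t • (-v) ∈ Ω := by
      apply hrs
      rw [mem_thickening_iff]
      refine ⟨x, hx, ?_⟩
      rw [dist_eq_norm, add_sub_cancel_left, norm_smul, norm_neg, Real.norm_of_nonneg ht.le]
      exact ht1
    have k1 := deriv_mono hD hxΩ hyΩ h1
    have k2 := deriv_mono hD hyΩ hxΩ h2
    have e1 : x + t • (-v) - x = (-t) • v := by module
    have e2 : x - (x + t • (-v)) = t • v := by module
    rw [e1, map_smul, smul_eq_mul] at k1
    rw [e2, map_smul, smul_eq_mul] at k2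
    apply mul_nonneg (hf0 x)
    simp only [hg, indicator_of_mem hxΩ, indicator_of_mem hyΩ, h1.lineDeriv_eq_fderiv,
      h2.lineDeriv_eq_fderiv]
    nlinarith
  · simp [image_eq_zero_of_notMem_tsupport hx]

lemma scalar1 {p d R : ℝ} (hp : 1 < p) (hd : 0 < d) (hdR : d ≤ R) :
    ((p - 1) / p) ^ p / d ^ p + (p - 1) * ((p - 1) / p) ^ p / R ^ p ≤
      ((p - 1) / p) ^ (p - 1) * ((p - 1) * d ^ (-p)) -
      (p - 1) * (((p - 1) / p) ^ (p - 1) * (d ^ (1 - p) - R ^ (1 - p))) ^ (p / (p - 1)) := by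
  have hR : 0 < R := hd.trans_le hdR
  have hp1 : 0 < p - 1 := by linarith
  have hp0 : 0 < p := by linarith
  have hk : 0 < (p - 1) / p := by positivity
  have hAB : R ^ (1 - p) ≤ d ^ (1 - p) := Real.rpow_le_rpow_of_nonpos hd hdR (by linarith)
  have hq : 1 ≤ p / (p - 1) := by rw [le_div_iff₀ hp1]; linarith
  have hB : 0 ≤ R ^ (1 - p) := by positivity
  have h1 := Real.add_rpow_le_rpow_add (sub_nonneg.2 hAB) hB hq
  rw [sub_add_cancel, ← Real.rpow_mul hR.le, ← Real.rpow_mul hd.le] at h1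
  have e : (1 - p) * (p / (p - 1)) = -p := by field_simp; ring
  rw [e] at h1
  rw [Real.mul_rpow (by positivity) (sub_nonneg.2 hAB), ← Real.rpow_mul hk.le]
  have e2 : (p - 1) * (p / (p - 1)) = p := by field_simp
  rw [e2]
  have e3 : ((p - 1) / p) ^ (p - 1) * (p - 1) = p * ((p - 1) / p) ^ p := by
    rw [Real.rpow_sub_one hk.ne']; field_simp
  rw [← mul_assoc, e3, div_eq_mul_inv (_ ^ p) (d ^ p), div_eq_mul_inv _ (R ^ p), ← Real.rpow_neg hd.le, ← Real.rpow_neg hR.le]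
  have hC : 0 < ((p - 1) / p) ^ p := by positivity
  have := mul_le_mul_of_nonneg_left h1 (mul_pos hp1 hC).le
  nlinarith

lemma scalar2 {p a ξ N G : ℝ} (hp : 1 < p) (hξ : |ξ| ≤ N) (hG : 0 ≤ G) :
    G * (p * |a| ^ (p - 2) * a * ξ) - (p - 1) * G ^ (p / (p - 1)) * |a| ^ p ≤ N ^ p := by
  have hp1 : 0 < p - 1 := by linarith
  have hp0 : 0 < p := by linarith
  have hc : p.HolderConjugate (p / (p - 1)) := Real.HolderConjugate.conjExponent hp
  have h1 := Real.young_inequality_of_nonneg (abs_nonneg ξ)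
    (mul_nonneg hG (Real.rpow_nonneg (abs_nonneg a) (p - 1))) hc
  rw [Real.mul_rpow hG (by positivity), ← Real.rpow_mul (abs_nonneg a)] at h1
  have e2 : (p - 1) * (p / (p - 1)) = p := by field_simp
  rw [e2] at h1
  have h2 : |ξ| ^ p ≤ N ^ p := Real.rpow_le_rpow (abs_nonneg _) hξ hp0.le
  have h3 : |a| ^ (p - 2) * a * ξ ≤ |a| ^ (p - 1) * |ξ| := by
    rcases eq_or_ne a 0 with h | h
    · rw [h]; simp; positivity
    · have : |a| ^ (p - 1) = |a| ^ (p - 2) * |a| := by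
        rw [← Real.rpow_add_one (by positivity)]; congr 1; ring
      rw [this, mul_assoc, mul_assoc, ← abs_mul]
      gcongr
      exact le_abs_self _
  have h4 := mul_le_mul_of_nonneg_left h3 (mul_nonneg hG hp0.le)
  have h5 := mul_le_mul_of_nonneg_left h1 hp0.le
  have e5 : p * (|ξ| ^ p / p + G ^ (p / (p - 1)) * |a| ^ p / (p / (p - 1))) =
      |ξ| ^ p + (p - 1) * G ^ (p / (p - 1)) * |a| ^ p := by field_simp
  rw [e5] at h5
  linarith

lemma lip_rpow {p s₀ : ℝ} (hp : 1 < p) (hs : 0 < s₀) :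
    LipschitzOnWith (((p - 1) * s₀ ^ (-p)).toNNReal) (fun s : ℝ => s ^ (1 - p)) (Ici s₀) := by
  apply (convex_Ici s₀).lipschitzOnWith_of_nnnorm_hasDerivWithin_le
    (f' := fun s => (1 - p) * s ^ (1 - p - 1))
  · intro x hx
    exact (Real.hasDerivAt_rpow_const (Or.inl (hs.trans_le hx).ne')).hasDerivWithinAt
  · intro x hx
    rw [← NNReal.coe_le_coe, Real.coe_toNNReal _ (by have : 0 < p - 1 := by linarith
                                                     positivity)]
    have hx0 : 0 < x := hs.trans_le hx
    have e : 1 - p - 1 = -p := by ring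
    rw [coe_nnnorm, norm_mul, Real.norm_eq_abs, abs_of_neg (by linarith : 1 - p < 0), e,
      Real.norm_of_nonneg (by positivity)]
    have : x ^ (-p) ≤ s₀ ^ (-p) := Real.rpow_le_rpow_of_nonpos hs hx (by linarith)
    nlinarith

lemma lip_mul {X : Type*} [PseudoMetricSpace X] {f g : X → ℝ} {A B : NNReal} {M N : ℝ}
    (hf : LipschitzWith A f) (hg : LipschitzWith B g) (hM : ∀ x, ‖f x‖ ≤ M) (hN : ∀ x, ‖g x‖ ≤ N) :
    ∃ C, LipschitzWith C (fun x => f x * g x) := by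
  refine ⟨(A * N + M * B).toNNReal, LipschitzWith.of_dist_le' fun x y => ?_⟩
  have h1 := hf.dist_le_mul x y
  have h2 := hg.dist_le_mul x y
  rw [Real.dist_eq] at *
  have e : f x * g x - f y * g y = (f x - f y) * g x + f y * (g x - g y) := by ring
  have hMM := hM y
  have hNN := hN x
  have hM0 := (norm_nonneg _).trans hMM
  rw [Real.norm_eq_abs] at *
  rw [e]
  calc _ ≤ |(f x - f y) * g x| + |f y * (g x - g y)| := abs_add_le _ _
    _ = |f x - f y| * |g x| + |f y| * |g x - g y| := by rw [abs_mul, abs_mul]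
    _ ≤ (A * dist x y) * N + M * (B * dist x y) := by gcongr
    _ = _ := by ring

lemma sdist_le_inradius {n : ℕ} {Ω : Set (EuclideanSpace ℝ (Fin n))} (hΩ : IsOpen Ω)
    (hbd : IsBounded Ω) {x : EuclideanSpace ℝ (Fin n)} (hx : x ∈ Ω) :
    sdist Ω x ≤ inradius Ω := by
  apply le_csSup _ (mem_image_of_mem _ hx)
  exact ((sdist_lip Ω).isBounded_image hbd).bddAbove

lemma hardy_smooth {n : ℕ} (hn : 1 ≤ n) {p : ℝ} (hp : 1 < p)
    {Ω : Set (EuclideanSpace ℝ (Fin n))} (hΩ : IsOpen Ω)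
    (hbd : IsBounded Ω) (hconv : Convex ℝ Ω)
    {v : EuclideanSpace ℝ (Fin n) → ℝ} (hv : ContDiff ℝ (⊤ : ℕ∞) v)
    (hvc : HasCompactSupport v) (hvs : tsupport v ⊆ Ω) :
    ∫⁻ x in Ω, ENNReal.ofReal ((((p - 1) / p) ^ p / sdist Ω x ^ p +
      (p - 1) * ((p - 1) / p) ^ p / inradius Ω ^ p) * |v x| ^ p) ≤
    ∫⁻ x in Ω, ENNReal.ofReal (‖fderiv ℝ v x‖ ^ p) := by
  have hne := frontier_ne hn hbd
  have hp0 : 0 < p := by linarith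
  have hp1 : 0 < p - 1 := by linarith
  -- cutoff level
  obtain ⟨s₀, hs₀, hs₀K⟩ : ∃ s₀ : ℝ, 0 < s₀ ∧ ∀ x ∈ tsupport v, s₀ < sdist Ω x := by
    rcases (tsupport v).eq_empty_or_nonempty with h | h
    · exact ⟨1, one_pos, by simp [h]⟩
    · obtain ⟨y, hy, hmin⟩ := hvc.isCompact.exists_isMinOn h (sdist_lip Ω).continuous.continuousOn
      have := sdist_pos hΩ hne (hvs hy)
      refine ⟨sdist Ω y / 2, by linarith, fun x hx => ?_⟩
      have : sdist Ω y ≤ sdist Ω x := hmin hx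
      linarith
  set R := inradius Ω with hR
  set c := ((p - 1) / p) ^ (p - 1) with hc
  have hcpos : 0 < c := by positivity
  set φ : EuclideanSpace ℝ (Fin n) → ℝ := fun x => |v x| ^ p with hφ
  set g : EuclideanSpace ℝ (Fin n) → ℝ :=
    fun x => c * ((max (sdist Ω x) s₀) ^ (1 - p) - R ^ (1 - p)) with hg
  have hv1 : ContDiff ℝ 1 v := hv.of_le (by exact_mod_cast le_top)
  have hφ1 : ContDiff ℝ 1 φ := by
    have := hv1.norm_rpow hp
    simpa only [Real.norm_eq_abs] using this
  have hφs : tsupport φ ⊆ tsupport v := by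
    apply closure_mono
    intro x hx
    rw [Function.mem_support] at hx ⊢
    intro h0
    apply hx
    simp [hφ, h0, hp0.ne']
  have hφc : HasCompactSupport φ := hvc.mono' ((subset_tsupport _).trans hφs)
  obtain ⟨B, hBl⟩ := ContDiff.lipschitzWith_of_hasCompactSupport hφc hφ1 (by simp)
  obtain ⟨N, hN⟩ := hφc.exists_bound_of_continuous hφ1.continuous
  have hgl : ∃ A, LipschitzWith A g := by
    have h1 : LipschitzWith 1 (fun x => max (sdist Ω x) s₀) := (sdist_lip Ω).max_const s₀
    have h2 := (lip_rpow hp hs₀).comp (s := univ) (h1.lipschitzOnWith)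
      (fun x _ => mem_Ici.2 (le_max_right _ _))
    rw [lipschitzOnWith_univ] at h2
    refine ⟨_, LipschitzWith.of_dist_le' (K := c * ((p - 1) * s₀ ^ (-p))) fun x y => ?_⟩
    have h3 := h2.dist_le_mul x y
    have e : (p - 1) * s₀ ^ (-p) = (((p - 1) * s₀ ^ (-p)).toNNReal : ℝ) := by
      rw [Real.coe_toNNReal]; positivity
    rw [Real.dist_eq] at h3 ⊢
    simp only [Function.comp, NNReal.coe_mul, ← e, NNReal.coe_one, mul_one] at h3
    have : g x - g y = c * ((max (sdist Ω x) s₀) ^ (1 - p) - (max (sdist Ω y) s₀) ^ (1 - p)) := by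
      simp only [hg]; ring
    rw [this, abs_mul, abs_of_pos hcpos, mul_assoc]
    gcongr
  obtain ⟨A, hA⟩ := hgl
  have hgb : ∀ x, ‖g x‖ ≤ c * (s₀ ^ (1 - p) + |R ^ (1 - p)|) := by
    intro x
    simp only [hg]
    rw [norm_mul, Real.norm_of_nonneg hcpos.le]
    gcongr
    refine (norm_sub_le _ _).trans ?_
    rw [Real.norm_eq_abs, Real.norm_eq_abs]
    have hm : 0 < max (sdist Ω x) s₀ := lt_max_of_lt_right hs₀
    rw [abs_of_pos (by positivity)]
    gcongr ?_ + _
    exact Real.rpow_le_rpow_of_nonpos hs₀ (le_max_right _ _) (by linarith)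
  obtain ⟨C', hfl⟩ := lip_mul hA hBl hgb hN
  set f : EuclideanSpace ℝ (Fin n) → ℝ := fun x => g x * φ x with hf
  have hfs : tsupport f ⊆ tsupport v :=
    (tsupport_mul_subset_right (f := g) (g := φ)).trans hφs
  have hfc : HasCompactSupport f := hvc.mono' ((subset_tsupport _).trans hfs)
  have hgK : ∀ x ∈ tsupport v, 0 ≤ g x ∧ g x = c * (sdist Ω x ^ (1 - p) - R ^ (1 - p)) := by
    intro x hx
    have h1 := hs₀K x hx
    have h2 := sdist_le_inradius hΩ hbd (hvs hx)
    have e : g x = c * (sdist Ω x ^ (1 - p) - R ^ (1 - p)) := by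
      simp only [hg]; rw [max_eq_left h1.le]
    refine ⟨?_, e⟩
    rw [e]
    apply mul_nonneg hcpos.le
    rw [sub_nonneg]
    exact Real.rpow_le_rpow_of_nonpos (hs₀.trans h1) h2 (by linarith)
  have hf0 : ∀ x, 0 ≤ f x := by
    intro x
    by_cases hx : x ∈ tsupport v
    · exact mul_nonneg (hgK x hx).1 (by positivity)
    · simp [hf, hφ, image_eq_zero_of_notMem_tsupport hx, hp0.ne']
  have hDc := sdist_concave hΩ hne hconv
  have hDl := sdist_lip Ω
  let b := EuclideanSpace.basisFun (Fin n) ℝ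
  set I : EuclideanSpace ℝ (Fin n) → ℝ :=
    fun x => ∑ i, lineDeriv ℝ f x (b i) * lineDeriv ℝ (sdist Ω) x (b i) with hI
  have hIi : ∀ i, IntegrableOn (fun x => lineDeriv ℝ f x (b i) * lineDeriv ℝ (sdist Ω) x (b i)) Ω := by
    intro i
    refine IntegrableOn.of_bound hbd.measure_lt_top
      (((measurable_lineDeriv hfl.continuous).mul
        (measurable_lineDeriv hDl.continuous)).aestronglyMeasurable)
      ((C' * ‖b i‖) * ((1 : NNReal) * ‖b i‖)) ?_
    refine Eventually.of_forall fun x => ?_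
    rw [norm_mul]
    gcongr
    · exact norm_lineDeriv_le_of_lipschitz ℝ hfl
    · exact norm_lineDeriv_le_of_lipschitz ℝ hDl
  have hIint : IntegrableOn I Ω := integrable_finset_sum _ fun i _ => hIi i
  have hI0 : 0 ≤ ∫ x in Ω, I x := by
    rw [integral_finset_sum _ fun i _ => hIi i]
    exact Finset.sum_nonneg fun i _ =>
      weak_super hΩ hbd hDc hDl hfl hf0 hfc (hfs.trans hvs) (b i)
  -- pointwise
  have hpt : ∀ᵐ x ∂(volume.restrict Ω), (((p - 1) / p) ^ p / sdist Ω x ^ p +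
      (p - 1) * ((p - 1) / p) ^ p / R ^ p) * |v x| ^ p ≤ ‖fderiv ℝ v x‖ ^ p - I x := by
    filter_upwards [ae_restrict_of_ae (hDl.ae_differentiableAt (μ := volume)),
      ae_restrict_of_ae (hfl.ae_differentiableAt (μ := volume)),
      ae_restrict_mem hΩ.measurableSet] with x hdx hfx hxΩ
    set e := (InnerProductSpace.toDual ℝ (EuclideanSpace ℝ (Fin n))).symm (fderiv ℝ (sdist Ω) x)
      with he
    have heD : ∀ w, fderiv ℝ (sdist Ω) x w = inner ℝ e w := by
      intro w; rw [he, InnerProductSpace.toDual_symm_apply]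
    have hen : ‖e‖ = 1 := by
      rw [he, LinearIsometryEquiv.norm_map]; exact sdist_grad hΩ hne hxΩ hdx
    have hIx : I x = fderiv ℝ f x e := by
      simp only [hI]
      simp_rw [hfx.lineDeriv_eq_fderiv, hdx.lineDeriv_eq_fderiv, heD]
      conv_rhs => rw [← b.sum_repr' e]
      simp only [map_sum, map_smul, smul_eq_mul]
      refine Finset.sum_congr rfl fun i _ => ?_
      rw [real_inner_comm, mul_comm]
    by_cases hx : x ∈ tsupport v
    · obtain ⟨hg0, hge⟩ := hgK x hx
      have hd0 := hs₀.trans (hs₀K x hx)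
      have hdR := sdist_le_inradius hΩ hbd hxΩ
      -- derivative of f
      have hgd : HasFDerivAt g ((c * ((1 - p) * sdist Ω x ^ (1 - p - 1))) • fderiv ℝ (sdist Ω) x) x := by
        have h1 : HasDerivAt (fun s : ℝ => c * (s ^ (1 - p) - R ^ (1 - p)))
            (c * ((1 - p) * sdist Ω x ^ (1 - p - 1))) (sdist Ω x) :=
          ((Real.hasDerivAt_rpow_const (Or.inl hd0.ne')).sub_const _).const_mul c
        have h2 := h1.comp_hasFDerivAt x hdx.hasFDerivAt
        refine h2.congr_of_eventuallyEq ?_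
        filter_upwards [hDl.continuous.continuousAt.eventually (lt_mem_nhds (hs₀K x hx))] with y hy
        simp only [hg, Function.comp]
        rw [max_eq_left hy.le]
      have hvd : HasFDerivAt v (fderiv ℝ v x) x :=
        (hv1.differentiable (by simp) x).hasFDerivAt
      have hφd : HasFDerivAt φ ((p * |v x| ^ (p - 2) * v x) • fderiv ℝ v x) x :=
        (hasDerivAt_abs_rpow (v x) hp).comp_hasFDerivAt x hvd
      have hfd := (hgd.mul hφd).fderiv
      have hfd' : fderiv ℝ f x = _ := hfd
      have hDe : fderiv ℝ (sdist Ω) x e = 1 := by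
        rw [heD, real_inner_self_eq_norm_sq, hen]; norm_num
      have hee : 1 - p - 1 = -p := by ring
      have hIx' : I x = g x * (p * |v x| ^ (p - 2) * v x * fderiv ℝ v x e) +
          |v x| ^ p * (c * ((1 - p) * sdist Ω x ^ (-p))) := by
        rw [hIx, hfd']
        simp only [ContinuousLinearMap.add_apply, ContinuousLinearMap.smul_apply, smul_eq_mul, hDe,
          hφ, hee]
        ring
      have s1 := scalar1 hp hd0 hdR
      rw [← hc, ← hge] at s1
      have hξ : |fderiv ℝ v x e| ≤ ‖fderiv ℝ v x‖ := by
        have := (fderiv ℝ v x).le_opNorm e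
        rwa [hen, mul_one] at this
      have s2 := scalar2 (a := v x) hp hξ hg0
      have s3 := mul_le_mul_of_nonneg_right s1 (Real.rpow_nonneg (abs_nonneg (v x)) p)
      rw [hIx']
      nlinarith
    · have h0 : v x = 0 := image_eq_zero_of_notMem_tsupport hx
      have h1 : fderiv ℝ f x = 0 := by
        have := notMem_tsupport_iff_eventuallyEq.1 (fun h => hx (hfs h))
        rw [this.fderiv_eq]; simp
      rw [hIx, h1, h0]
      simp [hp0.ne']
      positivity
  have hdi : IntegrableOn (fun x => ‖fderiv ℝ v x‖ ^ p) Ω := by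
    have hcont : Continuous (fderiv ℝ v) := hv1.continuous_fderiv (by simp)
    have : Integrable (fun x => ‖fderiv ℝ v x‖ ^ p) := by
      apply Continuous.integrable_of_hasCompactSupport
      · exact (hcont.norm).rpow_const fun x => Or.inr hp0.le
      · refine (hvc.fderiv ℝ).mono ?_
        intro x hx
        rw [Function.mem_support] at hx ⊢
        intro h; apply hx; simp [h, hp0.ne']
    exact this.integrableOn
  have hnn : 0 ≤ᵐ[volume.restrict Ω] fun x => ‖fderiv ℝ v x‖ ^ p - I x := by
    filter_upwards [hpt, ae_restrict_mem hΩ.measurableSet] with x hx hxΩ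
    refine le_trans ?_ hx
    have := sdist_pos hΩ hne hxΩ
    have := this.trans_le (sdist_le_inradius hΩ hbd hxΩ)
    positivity
  calc _ ≤ ∫⁻ x in Ω, ENNReal.ofReal (‖fderiv ℝ v x‖ ^ p - I x) :=
        lintegral_mono_ae (hpt.mono fun x hx => ENNReal.ofReal_le_ofReal hx)
    _ = ENNReal.ofReal (∫ x in Ω, (‖fderiv ℝ v x‖ ^ p - I x)) :=
        (ofReal_integral_eq_lintegral_ofReal (hdi.sub hIint) hnn).symm
    _ ≤ ENNReal.ofReal (∫ x in Ω, ‖fderiv ℝ v x‖ ^ p) := by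
        apply ENNReal.ofReal_le_ofReal
        rw [integral_sub hdi hIint]
        linarith
    _ = _ := ofReal_integral_eq_lintegral_ofReal hdi
        (Eventually.of_forall fun x => by positivity)

lemma lint_eLp {α F : Type*} [MeasurableSpace α] [NormedAddCommGroup F] {μ : Measure α} {p : ℝ}
    (hp : 1 < p) (h : α → F) :
    ∫⁻ x, ENNReal.ofReal (‖h x‖ ^ p) ∂μ = eLpNorm h (ENNReal.ofReal p) μ ^ p := by
  have hp0 : 0 < p := by linarith
  rw [eLpNorm_eq_lintegral_rpow_enorm_toReal (by simpa using hp0) ENNReal.ofReal_ne_top,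
    ENNReal.toReal_ofReal hp0.le, ← ENNReal.rpow_mul, one_div, inv_mul_cancel₀ hp0.ne',
    ENNReal.rpow_one]
  congr 1; ext x
  rw [← ofReal_norm_eq_enorm, ENNReal.ofReal_rpow_of_nonneg (norm_nonneg _) hp0.le]

/-- **Corollary 3.6 (improved Hardy inequality with sharp constant).**
For `Ω ⊂ ℝⁿ` open, bounded, convex with `C²` boundary and `u ∈ W^{1,p}_0(Ω)`:
`∫_Ω |∇u|^p ≥ C_p ∫_Ω |u|^p/δ^p + (p-1) C_p R_in^{-p} ∫_Ω |u|^p`. -/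
theorem hardy_improved_dirichlet (n : ℕ) (hn : 1 ≤ n) (p : ℝ) (hp : 1 < p)
    (Ω : Set (EuclideanSpace ℝ (Fin n))) (hΩ : IsOpen Ω) (hne : Ω.Nonempty)
    (hbd : IsBounded Ω) (hconv : Convex ℝ Ω) (hC2 : HasC2Boundary Ω)
    (u : EuclideanSpace ℝ (Fin n) → ℝ) (hu : MemW1p0 p Ω u) :
    (∫⁻ x in Ω, ENNReal.ofReal (‖fderiv ℝ u x‖ ^ p)) ≥
      ENNReal.ofReal (((p - 1) / p) ^ p) *
          (∫⁻ x in Ω, ENNReal.ofReal (|u x| ^ p / sdist Ω x ^ p)) +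
        ENNReal.ofReal ((p - 1) * ((p - 1) / p) ^ p / inradius Ω ^ p) *
          ∫⁻ x in Ω, ENNReal.ofReal (|u x| ^ p) := by
  have hnu := frontier_ne hn hbd
  have hp0 : 0 < p := by linarith
  have hp1 : 0 < p - 1 := by linarith
  obtain ⟨⟨huc, hud, -, -⟩, v, hv, hlim⟩ := hu
  set P := ENNReal.ofReal p with hP
  have hP0 : P ≠ 0 := by simpa [hP] using hp0
  have hP1 : 1 ≤ P := by rw [hP, ← ENNReal.ofReal_one]; exact ENNReal.ofReal_le_ofReal hp.le
  set μ := (volume : Measure (EuclideanSpace ℝ (Fin n))).restrict Ω with hμ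
  have hum : AEStronglyMeasurable u μ :=
    (huc.mono subset_closure).aestronglyMeasurable hΩ.measurableSet
  have hvm : ∀ j, AEStronglyMeasurable (v j) μ := fun j =>
    (hv j).1.continuous.aestronglyMeasurable
  have hdm : ∀ w : EuclideanSpace ℝ (Fin n) → ℝ, AEStronglyMeasurable (fderiv ℝ w) μ := fun w =>
    (measurable_fderiv ℝ w).aestronglyMeasurable
  -- convergence in Lp
  have hroot : ∀ a : ℕ → ℝ≥0∞, Tendsto (fun j => a j ^ p) atTop (𝓝 0) →
      Tendsto a atTop (𝓝 0) := by
    intro a ha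
    have := (ENNReal.continuous_rpow_const (y := p⁻¹)).tendsto 0 |>.comp ha
    rw [ENNReal.zero_rpow_of_pos (inv_pos.2 hp0)] at this
    refine this.congr fun j => ?_
    simp only [Function.comp]
    rw [← ENNReal.rpow_mul, mul_inv_cancel₀ hp0.ne', ENNReal.rpow_one]
  have hL0 : Tendsto (fun j => eLpNorm (v j - u) P μ) atTop (𝓝 0) := by
    apply hroot
    refine tendsto_of_tendsto_of_tendsto_of_le_of_le tendsto_const_nhds hlim
      (fun j => zero_le) (fun j => ?_)
    rw [← lint_eLp hp]
    exact le_self_add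
  have hL1 : Tendsto (fun j => eLpNorm (fderiv ℝ (v j) - fderiv ℝ u) P μ) atTop (𝓝 0) := by
    apply hroot
    refine tendsto_of_tendsto_of_tendsto_of_le_of_le tendsto_const_nhds hlim
      (fun j => zero_le) (fun j => ?_)
    rw [← lint_eLp hp]
    exact le_add_self
  obtain ⟨ns, hns, hae⟩ := (tendstoInMeasure_of_tendsto_eLpNorm hP0 hvm hum hL0).exists_seq_tendsto_ae
  set W : EuclideanSpace ℝ (Fin n) → ℝ := fun x => ((p - 1) / p) ^ p / sdist Ω x ^ p +
      (p - 1) * ((p - 1) / p) ^ p / inradius Ω ^ p with hW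
  have hsd : Measurable (sdist Ω) := (sdist_lip Ω).continuous.measurable
  have hWm : Measurable W := by
    have : Measurable fun x => sdist Ω x ^ p := hsd.pow_const p
    exact (this.const_div _).add_const _
  have hRpos : 0 < inradius Ω := by
    obtain ⟨x, hx⟩ := hne
    exact (sdist_pos hΩ hnu hx).trans_le (sdist_le_inradius hΩ hbd hx)
  -- the right-hand side as one integral
  have hrhs : ENNReal.ofReal (((p - 1) / p) ^ p) *
          (∫⁻ x in Ω, ENNReal.ofReal (|u x| ^ p / sdist Ω x ^ p)) +
        ENNReal.ofReal ((p - 1) * ((p - 1) / p) ^ p / inradius Ω ^ p) *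
          ∫⁻ x in Ω, ENNReal.ofReal (|u x| ^ p) = ∫⁻ x, ENNReal.ofReal (W x * |u x| ^ p) ∂μ := by
    rw [← lintegral_const_mul' _ _ ENNReal.ofReal_ne_top,
      ← lintegral_const_mul' _ _ ENNReal.ofReal_ne_top, ← lintegral_add_left']
    · refine setLIntegral_congr_fun hΩ.measurableSet fun x hx => ?_
      have h1 := sdist_pos hΩ hnu hx
      rw [← ENNReal.ofReal_mul (by positivity), ← ENNReal.ofReal_mul (by positivity),
        ← ENNReal.ofReal_add (by positivity) (by positivity)]
      congr 1
      simp only [hW]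
      ring
    · have h1 : AEMeasurable (fun x => |u x| ^ p) μ := by
        have := hum.norm.aemeasurable.pow_const p
        exact this
      exact ((h1.div (hsd.pow_const p).aemeasurable).ennreal_ofReal).const_mul _
  rw [ge_iff_le, hrhs]
  have hfatou : ∫⁻ x, ENNReal.ofReal (W x * |u x| ^ p) ∂μ ≤
      liminf (fun j => ∫⁻ x, ENNReal.ofReal (W x * |v (ns j) x| ^ p) ∂μ) atTop := by
    calc _ = ∫⁻ x, liminf (fun j => ENNReal.ofReal (W x * |v (ns j) x| ^ p)) atTop ∂μ := by
          apply lintegral_congr_ae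
          filter_upwards [hae] with x hx
          refine (Tendsto.liminf_eq ?_).symm
          refine (ENNReal.continuous_ofReal.tendsto _).comp ?_
          refine Tendsto.const_mul _ ?_
          exact (hx.abs).rpow_const (Or.inr hp0.le)
      _ ≤ _ := by
          apply lintegral_liminf_le
          intro j
          have : Measurable fun x => |v (ns j) x| ^ p :=
            ((hv (ns j)).1.continuous.abs.measurable).pow_const p
          exact (hWm.mul this).ennreal_ofReal
  refine hfatou.trans ?_
  have hup : ∀ j, ∫⁻ x, ENNReal.ofReal (W x * |v (ns j) x| ^ p) ∂μ ≤
      (eLpNorm (fderiv ℝ u) P μ + eLpNorm (fderiv ℝ (v (ns j)) - fderiv ℝ u) P μ) ^ p := by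
    intro j
    refine (hardy_smooth hn hp hΩ hbd hconv (hv (ns j)).1 (hv (ns j)).2.1 (hv (ns j)).2.2).trans ?_
    rw [lint_eLp hp]
    gcongr
    have := eLpNorm_add_le (hdm u) ((hdm (v (ns j))).sub (hdm u)) hP1
    rwa [add_sub_cancel] at this
  have hl : Tendsto (fun j => (eLpNorm (fderiv ℝ u) P μ +
      eLpNorm (fderiv ℝ (v (ns j)) - fderiv ℝ u) P μ) ^ p) atTop
      (𝓝 (eLpNorm (fderiv ℝ u) P μ ^ p)) := by
    have h1 := (tendsto_const_nhds (x := eLpNorm (fderiv ℝ u) P μ)).add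
      (hL1.comp hns.tendsto_atTop)
    rw [add_zero] at h1
    exact ((ENNReal.continuous_rpow_const (y := p)).tendsto _).comp h1
  rw [lint_eLp hp, ← hl.liminf_eq]
  exact liminf_le_liminf (Eventually.of_forall hup)

end RobinHardy
end
end

section
/- Let Ω ⊂ ℝ^n be an open bounded convex domain with boundary ∂Ω of class C^2, and for a positive constant σ > 0 let λ_p(Ω,σ) be the Robin–Hardy variational quantity with the constant boundary function σ. Then λ_p(Ω,σ) → C_p = ((p-1)/p)^p as σ → +∞. -/
open MeasureTheory Metric Set Filter Bornology
open scoped ENNReal Topology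

noncomputable section

namespace RobinHardy

lemma young_pt {p : ℝ} (hp : 1 < p) {f b τ : ℝ} (hτ : 0 < τ) :
    ((p-1)/p)^p * (|f|^p / τ^p) - |b|^p ≤
      -((p-1)/p)^(p-1) * (p * |f|^(p-2) * f * b * τ^(1-p) + |f|^p * ((1-p) * τ^(-p))) := by
  set c := (p-1)/p with hc
  have hp0 : 0 < p := by linarith
  have hc0 : 0 < c := div_pos (by linarith) hp0
  set a := |f| with ha
  have ha0 : 0 ≤ a := abs_nonneg f
  have hX0 : 0 ≤ c * a / τ := by positivity
  set X := c * a / τ with hX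
  have hXp : X^p = c^p * (a^p/τ^p) := by
    rw [hX, Real.div_rpow (by positivity) hτ.le, Real.mul_rpow hc0.le ha0, mul_div_assoc]
  have hX1 : X^(p-1) = c^(p-1) * (a^(p-1) * τ^(1-p)) := by
    rw [hX, Real.div_rpow (by positivity) hτ.le, Real.mul_rpow hc0.le ha0, mul_div_assoc,
      div_eq_mul_inv (a^(p-1)), ← Real.rpow_neg hτ.le, neg_sub]
  have hconj : Real.HolderConjugate p (p/(p-1)) := Real.HolderConjugate.conjExponent hp
  have hY := Real.young_inequality_of_nonneg (abs_nonneg b) (Real.rpow_nonneg hX0 (p-1)) hconj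
  have hp1 : p - 1 ≠ 0 := by linarith
  have e1 : (X^(p-1))^(p/(p-1)) = X^p := by
    rw [← Real.rpow_mul hX0]; congr 1; field_simp
  rw [e1] at hY
  have hY' : p * (|b| * X^(p-1)) ≤ |b|^p + (p-1) * X^p := by
    have := mul_le_mul_of_nonneg_left hY hp0.le
    have e : p * (|b|^p/p + X^p/(p/(p-1))) = |b|^p + (p-1) * X^p := by
      field_simp
    linarith
  have e2 : c^(p-1) * (a^p * ((1-p) * τ^(-p))) = - (p * X^p) := by
    rw [hXp, Real.rpow_sub_one hc0.ne', Real.rpow_neg hτ.le, hc]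
    have : (p-1)/p ≠ 0 := hc0.ne'
    field_simp
    ring
  have e3 : -(c^(p-1) * (p * a^(p-2) * f * b * τ^(1-p))) ≥ - (p * (|b| * X^(p-1))) := by
    have : c^(p-1) * (p * a^(p-2) * f * b * τ^(1-p)) ≤ p * (|b| * X^(p-1)) := by
      refine (le_abs_self _).trans (le_of_eq ?_)
      rw [hX1]
      have h1 : a^(p-1) = a^(p-2) * a := by
        rcases ha0.eq_or_lt with h | h
        · rw [← h, Real.zero_rpow hp1]; simp
        · rw [← Real.rpow_add_one h.ne']; congr 1; ring
      rw [h1]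
      simp only [abs_mul]
      rw [abs_of_nonneg (Real.rpow_nonneg hc0.le _), abs_of_nonneg (Real.rpow_nonneg ha0 _),
        abs_of_nonneg (Real.rpow_nonneg hτ.le _), abs_of_pos hp0]
      ring
    linarith
  rw [← hXp]
  have : -c^(p-1) * (p * a^(p-2) * f * b * τ^(1-p) + a^p * ((1-p) * τ^(-p))) =
    -(c^(p-1) * (p * a^(p-2) * f * b * τ^(1-p))) - c^(p-1) * (a^p * ((1-p) * τ^(-p))) := by ring
  rw [this, e2]
  linarith

lemma hardy1d_real {p : ℝ} (hp : 1 < p) {h α : ℝ} (hh : 0 ≤ h) (hα : 0 < α) {f : ℝ → ℝ}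
    (hf : ∀ t ∈ Icc 0 h, DifferentiableAt ℝ f t)
    (hint : IntegrableOn (fun t => |deriv f t|^p) (Icc 0 h)) :
    ∫ t in (0:ℝ)..h, (((p-1)/p)^p * (|f t|^p/(t+α)^p) - |deriv f t|^p) ≤
      ((p-1)/p)^(p-1) * α^(1-p) * |f 0|^p := by
  have hp0 : 0 < p := by linarith
  have hc0 : 0 < (p-1)/p := div_pos (by linarith) hp0
  have hfc : ContinuousOn f (Icc 0 h) := fun t ht => (hf t ht).continuousAt.continuousWithinAt
  have hpos : ∀ t ∈ Icc 0 h, 0 < t + α := fun t ht => by linarith [ht.1]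
  have hfa : ContinuousOn (fun t => |f t|^p) (Icc 0 h) :=
    hfc.abs.rpow_const (fun _ _ => Or.inr hp0.le)
  have hG := intervalIntegral.integral_le_sub_of_hasDeriv_right_of_le (a := 0) (b := h) hh
    (g := fun t => -((p-1)/p)^(p-1) * (|f t|^p * (t+α)^(1-p)))
    (g' := fun t => -((p-1)/p)^(p-1) * (p * |f t|^(p-2) * f t * deriv f t * (t+α)^(1-p)
      + |f t|^p * ((1-p) * (t+α)^(-p))))
    (φ := fun t => ((p-1)/p)^p * (|f t|^p/(t+α)^p) - |deriv f t|^p) ?_ ?_ ?_ ?_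
  · refine hG.trans ?_
    have : 0 ≤ ((p-1)/p)^(p-1) * (|f h|^p * (h+α)^(1-p)) := by
      have := hpos h ⟨hh, le_rfl⟩
      positivity
    simp only [zero_add]
    linarith
  · refine continuousOn_const.mul (hfa.mul ?_)
    exact (continuousOn_id.add continuousOn_const).rpow_const
      (fun t ht => Or.inl (hpos t ht).ne')
  · intro t ht
    have ht' : t ∈ Icc 0 h := Ioo_subset_Icc_self ht
    have h1 := (hasDerivAt_abs_rpow (f t) hp).comp t (hf t ht').hasDerivAt
    have h2 : HasDerivAt (fun t : ℝ => (t+α)^(1-p)) ((1-p) * (t+α)^(-p)) t := by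
      have := ((hasDerivAt_id t).add_const α).rpow_const (p := 1-p) (Or.inl (hpos t ht').ne')
      refine HasDerivAt.congr_deriv this ?_
      change 1 * (1-p) * (t+α)^(1-p-1) = _
      rw [show 1 - p - 1 = -p by ring]; ring
    have := ((h1.mul h2).const_mul (-((p-1)/p)^(p-1))).hasDerivWithinAt (s := Ioi t)
    refine this.congr_deriv ?_
    simp
  · refine Integrable.sub ?_ hint
    refine ContinuousOn.integrableOn_compact isCompact_Icc ?_
    refine continuousOn_const.mul (hfa.div ?_ ?_)
    · exact (continuousOn_id.add continuousOn_const).rpow_const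
        (fun t ht => Or.inl (hpos t ht).ne')
    · intro t ht
      exact (Real.rpow_pos_of_pos (hpos t ht) _).ne'
  · intro t ht
    exact young_pt hp (hpos t (Ioo_subset_Icc_self ht))

lemma hardy1d {p : ℝ} (hp : 1 < p) {h α σ : ℝ} (hα : 0 < α)
    (hσ : ((p-1)/p)^(p-1) * α^(1-p) ≤ σ) {f : ℝ → ℝ}
    (hf : ∀ t ∈ Icc 0 h, DifferentiableAt ℝ f t) :
    ENNReal.ofReal (((p-1)/p)^p) * ∫⁻ t in Ioc 0 h, ENNReal.ofReal (|f t|^p/(t+α)^p) ≤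
      (∫⁻ t in Ioc 0 h, ENNReal.ofReal (|deriv f t|^p)) +
        ENNReal.ofReal σ * ENNReal.ofReal (|f 0|^p) := by
  rcases lt_or_ge h 0 with hh | hh
  · simp [Ioc_eq_empty (not_lt.2 hh.le)]
  have hp0 : 0 < p := by linarith
  have hc0 : 0 < (p-1)/p := div_pos (by linarith) hp0
  by_cases htop : (∫⁻ t in Ioc 0 h, ENNReal.ofReal (|deriv f t|^p)) = ∞
  · rw [htop, top_add]; exact le_top
  have hmeas : AEStronglyMeasurable (fun t => |deriv f t|^p) (volume.restrict (Ioc 0 h)) :=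
    ((measurable_deriv f).abs.pow_const p).aestronglyMeasurable
  have hnn : 0 ≤ᵐ[volume.restrict (Ioc 0 h)] (fun t => |deriv f t|^p) :=
    Eventually.of_forall fun t => by positivity
  have hint : IntegrableOn (fun t => |deriv f t|^p) (Ioc 0 h) := by
    refine ⟨hmeas, ?_⟩
    rw [hasFiniteIntegral_iff_ofReal hnn]
    exact lt_top_iff_ne_top.2 htop
  have hpos : ∀ t ∈ Icc 0 h, 0 < t + α := fun t ht => by linarith [ht.1]
  have hfc : ContinuousOn f (Icc 0 h) := fun t ht => (hf t ht).continuousAt.continuousWithinAt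
  have hint2 : IntegrableOn (fun t => |f t|^p/(t+α)^p) (Ioc 0 h) := by
    refine IntegrableOn.mono_set ?_ Ioc_subset_Icc_self
    refine ContinuousOn.integrableOn_compact isCompact_Icc ?_
    refine (hfc.abs.rpow_const (fun _ _ => Or.inr hp0.le)).div ?_ ?_
    · exact (continuousOn_id.add continuousOn_const).rpow_const
        (fun t ht => Or.inl (hpos t ht).ne')
    · intro t ht
      exact (Real.rpow_pos_of_pos (hpos t ht) _).ne'
  have hnn2 : 0 ≤ᵐ[volume.restrict (Ioc 0 h)] (fun t => |f t|^p/(t+α)^p) := by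
    filter_upwards [ae_restrict_mem measurableSet_Ioc] with t ht
    have := hpos t (Ioc_subset_Icc_self ht)
    simp only [Pi.zero_apply]
    positivity
  have key := hardy1d_real hp hh hα hf ((integrableOn_Icc_iff_integrableOn_Ioc).2 hint)
  rw [intervalIntegral.integral_of_le hh, integral_sub (hint2.const_mul _) hint,
    integral_const_mul] at key
  rw [← ofReal_integral_eq_lintegral_ofReal hint2 hnn2,
    ← ofReal_integral_eq_lintegral_ofReal hint hnn, ← ENNReal.ofReal_mul (by positivity)]
  have hσ0 : 0 ≤ σ := le_trans (by positivity) hσ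
  rw [← ENNReal.ofReal_mul hσ0, ← ENNReal.ofReal_add (integral_nonneg_of_ae hnn) (by positivity)]
  refine ENNReal.ofReal_le_ofReal ?_
  have : ((p-1)/p)^(p-1) * α^(1-p) * |f 0|^p ≤ σ * |f 0|^p :=
    mul_le_mul_of_nonneg_right hσ (by positivity)
  linarith



lemma coords {m : ℕ} (ν : EuclideanSpace ℝ (Fin (m+1))) (hν : ‖ν‖ = 1) :
    ∃ (κ : EuclideanSpace ℝ (Fin (m+1)) →L[ℝ] (Fin m → ℝ))
      (ι : (Fin m → ℝ) →L[ℝ] EuclideanSpace ℝ (Fin (m+1))),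
      (∀ x, ‖κ x‖ ≤ ‖x‖) ∧ (∀ x, inner ℝ ν x • ν + ι (κ x) = x) ∧ (∀ z, κ (ι z) = z) ∧
      κ ν = 0 ∧ (∀ z, inner ℝ ν (ι z) = 0) ∧
      ∀ G : EuclideanSpace ℝ (Fin (m+1)) → ℝ≥0∞, Measurable G →
        ∫⁻ x, G x = ∫⁻ z, ∫⁻ t : ℝ, G (t • ν + ι z) := by
  obtain ⟨b, hb⟩ := Orthonormal.exists_orthonormalBasis_extension_of_card_eq
    (ι := Fin (m+1)) (𝕜 := ℝ) (E := EuclideanSpace ℝ (Fin (m+1))) (by simp)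
    (v := fun _ => ν) (s := {0}) (by
      constructor
      · intro i; simpa using hν
      · intro i j hij; exact absurd (Subsingleton.elim i j) hij)
  have hb0 : b 0 = ν := hb 0 (by simp)
  let κ : EuclideanSpace ℝ (Fin (m+1)) →L[ℝ] (Fin m → ℝ) :=
    ContinuousLinearMap.pi fun j => innerSL ℝ (b j.succ)
  let ι : (Fin m → ℝ) →L[ℝ] EuclideanSpace ℝ (Fin (m+1)) :=
    ∑ j : Fin m, (ContinuousLinearMap.proj (R := ℝ) (φ := fun _ : Fin m => ℝ) j).smulRight (b j.succ)
  have hκ : ∀ x j, κ x j = inner ℝ (b j.succ) x := fun x j => rfl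
  have hι : ∀ z, ι z = ∑ j, z j • b j.succ := by
    intro z; simp [ι]
  have hin : ∀ i j, inner ℝ (b i) (b j) = if i = j then (1:ℝ) else 0 :=
    fun i j => orthonormal_iff_ite.1 b.orthonormal i j
  refine ⟨κ, ι, ?_, ?_, ?_, ?_, ?_, ?_⟩
  · intro x
    refine (pi_norm_le_iff_of_nonneg (norm_nonneg x)).2 fun j => ?_
    rw [hκ]
    refine (norm_inner_le_norm _ _).trans ?_
    simp [b.orthonormal.1]
  · intro x
    rw [hι, ← hb0]
    have := b.sum_repr' x
    rw [Fin.sum_univ_succ] at this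
    simpa [hκ] using this
  · intro z
    ext j
    rw [hκ, hι, inner_sum]
    simp [inner_smul_right, hin]
  · ext j
    rw [hκ, ← hb0, hin]; simp
  · intro z
    rw [hι, inner_sum, ← hb0]
    simp only [inner_smul_right, hin]
    refine Finset.sum_eq_zero fun j _ => ?_
    rw [if_neg (Fin.succ_ne_zero j).symm, mul_zero]
  · intro G hG
    have h1 := (volume_preserving_piFinSuccAbove (fun _ : Fin (m+1) => ℝ) 0).symm
    have h2 := PiLp.volume_preserving_toLp (Fin (m+1))
    have h3 := b.measurePreserving_repr_symm
    have h4 := (h3.comp h2).comp h1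
    rw [← h4.lintegral_comp hG]
    have : (volume : Measure (ℝ × (Fin m → ℝ))) = (volume : Measure ℝ).prod volume := rfl
    rw [this, lintegral_prod_symm]
    swap
    · exact (hG.comp h4.measurable).aemeasurable
    refine lintegral_congr fun z => lintegral_congr fun t => ?_
    congr 1
    simp only [Function.comp]
    rw [← b.sum_repr_symm, hι, Fin.sum_univ_succ, hb0]
    simp [MeasurableEquiv.piFinSuccAbove, Fin.insertNthEquiv]

lemma exit_pt {F : Type*} [NormedAddCommGroup F] [NormedSpace ℝ F] {Ω : Set F} {x y : F}
    (hx : x ∈ Ω) (hy : y ∉ Ω) : ∃ s ∈ Icc (0:ℝ) 1, x + s • (y - x) ∈ frontier Ω := by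
  by_contra! hcon
  have hseg : IsPreconnected (segment ℝ x y) := (convex_segment x y).isPreconnected
  have hd : ∀ w ∈ segment ℝ x y, w ∉ frontier Ω := by
    intro w hw
    rw [segment_eq_image'] at hw
    obtain ⟨s, hs, rfl⟩ := hw
    exact hcon s hs
  have hcov : segment ℝ x y ⊆ interior Ω ∪ (closure Ω)ᶜ := by
    intro w hw
    by_cases h : w ∈ closure Ω
    · left
      by_contra h'
      exact hd w hw ⟨h, h'⟩
    · right; exact h
  obtain ⟨w, _, hw1, hw2⟩ := hseg _ _ isOpen_interior isClosed_closure.isOpen_compl hcov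
    ⟨x, left_mem_segment ℝ x y, by
      by_contra h
      exact hd x (left_mem_segment ℝ x y) ⟨subset_closure hx, h⟩⟩
    ⟨y, right_mem_segment ℝ x y, fun h => hd y (right_mem_segment ℝ x y)
      ⟨h, fun h' => hy (interior_subset h')⟩⟩
  exact hw2 (interior_subset_closure hw1)


lemma hausdorff_antilip {m : ℕ} {E : Type*} [MetricSpace E] [MeasurableSpace E] [BorelSpace E]
    (S : Set E) (T : E → (Fin m → ℝ)) (K : NNReal)
    (hT : ∀ x ∈ S, ∀ y ∈ S, dist x y ≤ K * dist (T x) (T y))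
    (hb : IsBounded (T '' S)) : Measure.hausdorffMeasure (m:ℝ) S < ∞ := by
  have h1 : AntilipschitzWith K (fun x : S => T x) :=
    AntilipschitzWith.of_le_mul_dist fun x y => hT x x.2 y y.2
  have h2 := h1.le_hausdorffMeasure_image (d := (m:ℝ)) (by positivity) univ
  have h3 := (isometry_subtype_coe (s := S)).hausdorffMeasure_image (d := (m:ℝ))
    (Or.inl (by positivity)) univ
  rw [image_univ, Subtype.range_coe] at h3
  rw [h3]
  refine h2.trans_lt (ENNReal.mul_lt_top ?_ ?_)
  · exact ENNReal.rpow_lt_top_of_nonneg (by positivity) (by simp)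
  · have : Measure.hausdorffMeasure (m:ℝ) = (volume : Measure (Fin m → ℝ)) := by
      have := hausdorffMeasure_pi_real (ι := Fin m)
      simpa using this
    rw [this]
    refine (hb.subset ?_).measure_lt_top
    rintro _ ⟨x, -, rfl⟩
    exact ⟨x, x.2, rfl⟩

lemma frontier_finite {m : ℕ} {Ω : Set (EuclideanSpace ℝ (Fin (m+1)))} (hΩ : IsOpen Ω)
    (hne : Ω.Nonempty) (hbd : IsBounded Ω) (hconv : Convex ℝ Ω) :
    Measure.hausdorffMeasure (m:ℝ) (frontier Ω) < ∞ := by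
  let e : Fin (m+1) → EuclideanSpace ℝ (Fin (m+1)) := fun i => EuclideanSpace.single i 1
  have hsum : ∀ x : EuclideanSpace ℝ (Fin (m+1)), x = ∑ j, x j • e j := by
    intro x
    have := (EuclideanSpace.basisFun (Fin (m+1)) ℝ).sum_repr x
    simpa [e] using this.symm
  let S : Fin (m+1) × Bool → Set (EuclideanSpace ℝ (Fin (m+1))) := fun q =>
    {y | y ∈ frontier Ω ∧ ∃ f : StrongDual ℝ (EuclideanSpace ℝ (Fin (m+1))),
      (∀ x ∈ frontier Ω, f x ≤ f y) ∧ 0 < |f (e q.1)| ∧ (∀ j, |f (e j)| ≤ |f (e q.1)|) ∧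
      f (e q.1) = (if q.2 then 1 else -1) * |f (e q.1)|}
  have hcov : frontier Ω ⊆ ⋃ q, S q := by
    intro y hy
    have hyΩ : y ∉ Ω := by
      have := hy.2; rwa [hΩ.interior_eq] at this
    obtain ⟨f, hf⟩ := geometric_hahn_banach_open_point hconv hΩ hyΩ
    obtain ⟨i, hi⟩ := Finite.exists_max (fun j => |f (e j)|)
    have hfi : 0 < |f (e i)| := by
      by_contra h
      have h0 : ∀ j, f (e j) = 0 := fun j => by
        have := hi j
        have h1 := abs_nonneg (f (e j))
        exact abs_eq_zero.1 (by linarith)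
      have hf0 : ∀ x, f x = 0 := fun x => by
        rw [hsum x, map_sum]; simp [h0]
      obtain ⟨x, hx⟩ := hne
      have := hf x hx
      rw [hf0, hf0] at this
      exact lt_irrefl _ this
    have hle : ∀ x ∈ frontier Ω, f x ≤ f y := by
      intro x hx
      have : closure Ω ⊆ {x | f x ≤ f y} :=
        closure_minimal (fun x hx => (hf x hx).le) (isClosed_le f.continuous continuous_const)
      exact this hx.1
    refine mem_iUnion.2 ?_
    rcases le_total 0 (f (e i)) with h | h
    · exact ⟨(i, true), hy, f, hle, hfi, hi, by simp [abs_of_nonneg h]⟩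
    · exact ⟨(i, false), hy, f, hle, hfi, hi, by simp [abs_of_nonpos h]⟩
  refine (measure_mono hcov).trans_lt ((measure_iUnion_le _).trans_lt ?_)
  rw [tsum_fintype]
  refine ENNReal.sum_lt_top.2 fun q _ => ?_
  let T : EuclideanSpace ℝ (Fin (m+1)) → (Fin m → ℝ) := fun x j => x (q.1.succAbove j)
  have hTc : Continuous T := by fun_prop
  have half : ∀ x ∈ S q, ∀ y ∈ S q,
      (if q.2 then (1:ℝ) else -1) * (x q.1 - y q.1) ≤ m * dist (T x) (T y) := by
    intro x hx y hy
    obtain ⟨hy1, f, hf1, hf2, hf3, hf4⟩ := hy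
    have h1 : f (x - y) ≤ 0 := by rw [map_sub]; linarith [hf1 x hx.1]
    rw [hsum (x - y), map_sum, Fin.sum_univ_succAbove _ q.1] at h1
    simp only [map_smul, smul_eq_mul, PiLp.sub_apply] at h1
    have h2 : ∀ j : Fin m, -(dist (T x) (T y) * |f (e q.1)|) ≤
        (x (q.1.succAbove j) - y (q.1.succAbove j)) * f (e (q.1.succAbove j)) := by
      intro j
      refine neg_le_of_abs_le ?_
      rw [abs_mul]
      refine mul_le_mul ?_ (hf3 _) (abs_nonneg _) dist_nonneg
      have := dist_le_pi_dist (T x) (T y) j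
      rwa [Real.dist_eq] at this
    have h3 : -(m * (dist (T x) (T y) * |f (e q.1)|)) ≤ ∑ j : Fin m,
        (x (q.1.succAbove j) - y (q.1.succAbove j)) * f (e (q.1.succAbove j)) := by
      have := Finset.sum_le_sum (s := Finset.univ) (fun j _ => h2 j)
      refine le_trans (le_of_eq ?_) this
      simp
    rw [hf4] at h1
    have h4 : ((if q.2 then (1:ℝ) else -1) * (x q.1 - y q.1)) * |f (e q.1)| ≤
        (m * dist (T x) (T y)) * |f (e q.1)| := by
      nlinarith
    exact le_of_mul_le_mul_right h4 hf2
  refine hausdorff_antilip (S q) T (2*m) ?_ ?_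
  · intro x hx y hy
    have h1 := half x hx y hy
    have h2 := half y hy x hx
    rw [dist_comm (T y)] at h2
    have h3 : |x q.1 - y q.1| ≤ m * dist (T x) (T y) := by
      rw [abs_le]
      by_cases h : q.2 <;> simp [h] at h1 h2 <;> constructor <;> linarith
    have h4 : dist x y ≤ ∑ j, |x j - y j| := by
      rw [dist_eq_norm]
      conv_lhs => rw [hsum (x - y)]
      refine (norm_sum_le _ _).trans (Finset.sum_le_sum fun j _ => ?_)
      rw [norm_smul]; simp [e]
    rw [Fin.sum_univ_succAbove _ q.1] at h4
    have h5 : ∑ j : Fin m, |x (q.1.succAbove j) - y (q.1.succAbove j)| ≤ m * dist (T x) (T y) := by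
      have : ∀ j ∈ Finset.univ, |x (q.1.succAbove j) - y (q.1.succAbove j)| ≤ dist (T x) (T y) := by
        intro j _
        have := dist_le_pi_dist (T x) (T y) j
        rwa [Real.dist_eq] at this
      refine (Finset.sum_le_sum this).trans (le_of_eq ?_)
      simp
    push_cast
    linarith
  · have hcpt : IsCompact (closure Ω) := hbd.isCompact_closure
    refine (hcpt.image hTc).isBounded.subset (image_mono ?_)
    intro y hy
    exact frontier_subset_closure hy.1

lemma polytope {E : Type*} [NormedAddCommGroup E] [InnerProductSpace ℝ E] [FiniteDimensional ℝ E]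
    {Ω K : Set E} (hΩ : IsOpen Ω) (hbd : IsBounded Ω)
    (hK : IsCompact K) (hKc : Convex ℝ K) (hKn : K.Nonempty) (hKΩ : K ⊆ Ω) :
    ∃ (N : ℕ) (ν : Fin N → E) (c : Fin N → ℝ), (∀ i, ‖ν i‖ = 1) ∧
      (∀ i j, ν i = ν j → c i = c j → i = j) ∧
      (∀ x ∈ K, ∀ i, inner ℝ (ν i) x < c i) ∧ ∀ x, (∀ i, inner ℝ (ν i) x ≤ c i) → x ∈ Ω := by
  have h1 : ∀ y : frontier Ω, ∃ q : E × ℝ, ‖q.1‖ = 1 ∧ (∀ a ∈ K, inner ℝ q.1 a < q.2) ∧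
      q.2 < inner ℝ q.1 (y:E) := by
    rintro ⟨y, hy⟩
    have hyK : y ∉ K := fun h => by
      have := hy.2; rw [hΩ.interior_eq] at this; exact this (hKΩ h)
    obtain ⟨f, u, hf1, hf2⟩ := geometric_hahn_banach_closed_point hKc hK.isClosed hyK
    have hf0 : 0 < ‖f‖ := by
      rw [norm_pos_iff]
      rintro rfl
      obtain ⟨k, hk⟩ := hKn
      have := hf1 k hk
      simp at this hf2
      linarith
    let w := (InnerProductSpace.toDual ℝ E).symm f
    have hw : ∀ x, inner ℝ w x = f x := fun x => InnerProductSpace.toDual_symm_apply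
    have hwn : ‖w‖ = ‖f‖ := LinearIsometryEquiv.norm_map _ _
    refine ⟨(‖f‖⁻¹ • w, ‖f‖⁻¹ * u), ?_, ?_, ?_⟩
    · rw [norm_smul, hwn]; simp [hf0.ne']
    · intro a ha
      simp only [real_inner_smul_left, hw]
      exact mul_lt_mul_of_pos_left (hf1 a ha) (by positivity)
    · simp only [real_inner_smul_left, hw]
      exact mul_lt_mul_of_pos_left hf2 (by positivity)
  choose q hq1 hq2 hq3 using h1
  have hcpt : IsCompact (frontier Ω) :=
    hbd.isCompact_closure.of_isClosed_subset isClosed_frontier frontier_subset_closure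
  obtain ⟨t, ht⟩ := hcpt.elim_finite_subcover (fun y : frontier Ω => {x | (q y).2 < inner ℝ (q y).1 x})
    (fun y => isOpen_lt continuous_const (by fun_prop))
    (fun y hy => mem_iUnion.2 ⟨⟨y, hy⟩, hq3 ⟨y, hy⟩⟩)
  classical
  let T : Finset (E × ℝ) := t.image q
  let eqv := T.equivFin.symm
  have hmem : ∀ i, ∃ y, q y = (eqv i : E × ℝ) := fun i => by
    obtain ⟨y, _, hy⟩ := Finset.mem_image.1 (eqv i).2
    exact ⟨y, hy⟩
  refine ⟨T.card, fun i => (eqv i).1.1, fun i => (eqv i).1.2, ?_, ?_, ?_, ?_⟩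
  · intro i; obtain ⟨y, hy⟩ := hmem i; dsimp only; rw [← hy]; exact hq1 y
  · intro i j h1 h2
    exact eqv.injective (Subtype.ext (Prod.ext h1 h2))
  · intro x hx i; obtain ⟨y, hy⟩ := hmem i; dsimp only; rw [← hy]; exact hq2 y x hx
  · intro x hx
    by_contra hxΩ
    obtain ⟨k, hk⟩ := hKn
    obtain ⟨s, hs, hw⟩ := exit_pt (hKΩ hk) hxΩ
    obtain ⟨y, hy, hy2⟩ := mem_iUnion₂.1 (ht hw)
    have h3 := hx (eqv.symm ⟨q y, Finset.mem_image_of_mem q hy⟩)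
    simp only [Equiv.apply_symm_apply] at h3
    have h4 := hq2 y k hk
    simp only [mem_ofPred_eq, inner_add_right, inner_smul_right, inner_sub_right] at hy2
    nlinarith [hs.1, hs.2]



lemma cell_line {E : Type*} [NormedAddCommGroup E] [InnerProductSpace ℝ E]
    [FiniteDimensional ℝ E] [MeasurableSpace E] [BorelSpace E] {p : ℝ} (hp : 1 < p)
    {α σ : ℝ} (hα : 0 < α) (hσ : ((p-1)/p)^(p-1) * α^(1-p) ≤ σ)
    {Ω P F : Set E} {v δ : E → ℝ}
    (hvd : ∀ x ∈ Ω, DifferentiableAt ℝ v x)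
    {ν : E} (hν : ‖ν‖ = 1) {c : ℝ} (hPm : MeasurableSet P)
    (hPb : IsBounded P) (hPcl : closure P ⊆ Ω)
    (hP1 : ∀ x ∈ P, 0 < c - inner ℝ ν x) (hP2 : ∀ x ∈ P, x + (c - inner ℝ ν x) • ν ∈ F)
    (hdown : ∀ y ∈ F, ∀ t : ℝ, y - t • ν ∈ P → ∀ s, 0 < s → s ≤ t → y - s • ν ∈ P)
    (hδ : ∀ x ∈ P, c - inner ℝ ν x ≤ δ x) (y : E) (hy : inner ℝ ν y = c) :
    ENNReal.ofReal (((p-1)/p)^p) *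
        ∫⁻ t : ℝ, P.indicator (fun x => ENNReal.ofReal (|v x|^p/(δ x + α)^p)) (y - t • ν) ≤
      (∫⁻ t : ℝ, P.indicator (fun x => ENNReal.ofReal (‖fderiv ℝ v x‖^p)) (y - t • ν)) +
        ENNReal.ofReal σ * F.indicator (fun x => ENNReal.ofReal (|v x|^p)) y := by
  have hp0 : 0 < p := by linarith
  have hν2 : inner ℝ ν ν = (1:ℝ) := by rw [real_inner_self_eq_norm_sq, hν]; norm_num
  let S : Set ℝ := {t | y - t • ν ∈ P}
  have hinn : ∀ t : ℝ, c - inner ℝ ν (y - t • ν) = t := by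
    intro t
    rw [inner_sub_right, inner_smul_right, hν2, hy]; ring
  have hcont : Continuous (fun t : ℝ => y - t • ν) := by fun_prop
  have hSm : MeasurableSet S := hcont.measurable hPm
  have hind : ∀ g : E → ℝ≥0∞, (∫⁻ t : ℝ, P.indicator g (y - t • ν)) =
      ∫⁻ t in S, g (y - t • ν) := by
    intro g
    rw [← lintegral_indicator hSm]
    rfl
  rw [hind, hind]
  rcases S.eq_empty_or_nonempty with hS | ⟨t0, ht0⟩
  · simp [hS]
  have hyF : y ∈ F := by
    have := hP2 _ ht0
    rwa [hinn, sub_add_cancel] at this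
  have hSpos : ∀ t ∈ S, 0 < t := by
    intro t ht
    have := hP1 _ ht
    rwa [hinn] at this
  have hSb : BddAbove S := by
    obtain ⟨R, hR⟩ := hPb.exists_norm_le
    refine ⟨‖y‖ + R, fun t ht => ?_⟩
    have h1 := hR _ ht
    have h2 : ‖t • ν‖ = t := by rw [norm_smul, hν, mul_one, Real.norm_of_nonneg (hSpos t ht).le]
    have h3 : ‖t • ν‖ ≤ ‖y‖ + ‖y - t • ν‖ := by
      have := norm_sub_le y (y - t • ν)
      simpa using this
    linarith
  set h := sSup S with hh
  have hS1 : S ⊆ Ioc 0 h := fun t ht => ⟨hSpos t ht, le_csSup hSb ht⟩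
  have hS2 : Ioo 0 h ⊆ S := by
    intro t ht
    obtain ⟨s, hs, hts⟩ := exists_lt_of_lt_csSup ⟨t0, ht0⟩ ht.2
    exact hdown y hyF s hs t ht.1 hts.le
  have hpos : 0 < h := (hS1 ht0).1.trans_le (hS1 ht0).2
  have hSae : S =ᵐ[volume] Ioc 0 h := by
    refine Filter.EventuallyLE.antisymm (HasSubset.Subset.eventuallyLE hS1) ?_
    exact (Ioo_ae_eq_Ioc (μ := volume) (a := (0:ℝ)) (b := h)).symm.le.trans
      (HasSubset.Subset.eventuallyLE hS2)
  have hin : ∀ t ∈ Icc 0 h, y - t • ν ∈ Ω := by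
    intro t ht
    apply hPcl
    have h1 : Icc 0 h ⊆ closure S := by
      rw [← closure_Ioo hpos.ne]
      exact closure_mono hS2
    have := map_mem_closure hcont (h1 ht) (t := P) (fun s hs => hs)
    exact this
  let f : ℝ → ℝ := fun t => v (y - t • ν)
  have hfd : ∀ t ∈ Icc 0 h, HasDerivAt f (fderiv ℝ v (y - t • ν) (-ν)) t := by
    intro t ht
    have h1 := (hvd _ (hin t ht)).hasFDerivAt
    have h2 : HasDerivAt (fun t : ℝ => y - t • ν) (-ν) t := by
      have := ((hasDerivAt_id t).smul_const ν).const_sub y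
      simpa using this
    exact h1.comp_hasDerivAt t h2
  have key := hardy1d hp hα hσ (h := h) (f := f) (fun t ht => (hfd t ht).differentiableAt)
  rw [Measure.restrict_congr_set hSae, indicator_of_mem hyF]
  have hf0 : f 0 = v y := by simp [f]
  rw [hf0] at key
  refine le_trans ?_ (key.trans ?_)
  · refine mul_le_mul' le_rfl ?_
    rw [← Measure.restrict_congr_set hSae]
    refine setLIntegral_mono' hSm fun t ht => ?_
    refine ENNReal.ofReal_le_ofReal ?_
    have h1 := hδ _ ht
    rw [hinn] at h1
    have h2 := hSpos t ht
    have h3 : 0 < (t + α)^p := Real.rpow_pos_of_pos (by linarith) _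
    refine div_le_div_of_nonneg_left (by positivity) h3 ?_
    exact Real.rpow_le_rpow (by linarith) (by linarith) hp0.le
  · gcongr ?_ + _
    refine setLIntegral_mono' measurableSet_Ioc fun t ht => ?_
    refine ENNReal.ofReal_le_ofReal ?_
    refine Real.rpow_le_rpow (abs_nonneg _) ?_ hp0.le
    rw [(hfd t (Ioc_subset_Icc_self ht)).deriv]
    have := (fderiv ℝ v (y - t • ν)).le_opNorm (-ν)
    rwa [norm_neg, hν, mul_one] at this

lemma cell {m : ℕ} {p : ℝ} (hp : 1 < p)
    {α σ : ℝ} (hα : 0 < α) (hσ : ((p-1)/p)^(p-1) * α^(1-p) ≤ σ)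
    {Ω P F : Set (EuclideanSpace ℝ (Fin (m+1)))} {v δ : EuclideanSpace ℝ (Fin (m+1)) → ℝ}
    (hv : Measurable v) (hδm : Measurable δ)
    (hΩb : IsBounded Ω)
    (hvd : ∀ x ∈ Ω, DifferentiableAt ℝ v x)
    {ν : EuclideanSpace ℝ (Fin (m+1))} (hν : ‖ν‖ = 1) {c : ℝ} (hPm : MeasurableSet P)
    (hFm : MeasurableSet F) (hPcl : closure P ⊆ Ω)
    (hP1 : ∀ x ∈ P, 0 < c - inner ℝ ν x) (hP2 : ∀ x ∈ P, x + (c - inner ℝ ν x) • ν ∈ F)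
    (hdown : ∀ y ∈ F, ∀ t : ℝ, y - t • ν ∈ P → ∀ s, 0 < s → s ≤ t → y - s • ν ∈ P)
    (hδ : ∀ x ∈ P, c - inner ℝ ν x ≤ δ x)
    (hF : ∀ y ∈ F, inner ℝ ν y = c) (hFΩ : F ⊆ Ω)
    {ε : ℝ} (hε : ∀ y ∈ frontier Ω, inner ℝ ν y - c < ε)
    {w : EuclideanSpace ℝ (Fin (m+1)) → ℝ≥0∞}
    (hw : ∀ x ∈ Ω, ∀ y ∈ frontier Ω, dist x y < ε → ENNReal.ofReal (|v x|^p) ≤ w y) :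
    ENNReal.ofReal (((p-1)/p)^p) *
        ∫⁻ x in P, ENNReal.ofReal (|v x|^p/(δ x + α)^p) ≤
      (∫⁻ x in P, ENNReal.ofReal (‖fderiv ℝ v x‖^p)) +
        ENNReal.ofReal σ * ∫⁻ y in {y | y ∈ frontier Ω ∧ c ≤ inner ℝ ν y ∧
          y - (inner ℝ ν y - c) • ν ∈ F}, w y ∂(Measure.hausdorffMeasure (m:ℝ)) := by
  obtain ⟨κ, ι, hκ, hdec, hκι, hκν, hνι, hfub⟩ := coords ν hν
  have hν2 : inner ℝ ν ν = (1:ℝ) := by rw [real_inner_self_eq_norm_sq, hν]; norm_num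
  have hg1 : Measurable (fun x => ENNReal.ofReal (|v x|^p/(δ x + α)^p)) := by fun_prop
  have hg2 : Measurable (fun x => ENNReal.ofReal (‖fderiv ℝ v x‖^p)) := by
    have := measurable_fderiv ℝ v
    fun_prop
  have hg3 : Measurable (fun x => ENNReal.ofReal (|v x|^p)) := by fun_prop
  have hfub' : ∀ g : EuclideanSpace ℝ (Fin (m+1)) → ℝ≥0∞, Measurable g →
      ∫⁻ x in P, g x = ∫⁻ z, ∫⁻ t : ℝ, P.indicator g ((c • ν + ι z) - t • ν) := by
    intro g hg
    rw [← lintegral_indicator hPm, hfub _ (hg.indicator hPm)]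
    refine lintegral_congr fun z => ?_
    rw [← lintegral_sub_left_eq_self _ c]
    refine lintegral_congr fun t => ?_
    congr 1
    module
  have hyc : ∀ z, inner ℝ ν (c • ν + ι z) = c := fun z => by
    rw [inner_add_right, inner_smul_right, hν2, hνι]; ring
  have hFi : Measurable (fun z => F.indicator (fun x => ENNReal.ofReal (|v x|^p)) (c • ν + ι z)) := by
    exact (hg3.indicator hFm).comp (by fun_prop)
  rw [hfub' _ hg1, hfub' _ hg2]
  rw [← lintegral_const_mul' _ _ ENNReal.ofReal_ne_top]
  refine (lintegral_mono fun z => cell_line hp hα hσ hvd hν hPm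
    (hΩb.subset (subset_closure.trans hPcl)) hPcl hP1 hP2 hdown hδ (c • ν + ι z) (hyc z)).trans ?_
  rw [lintegral_add_right _ (hFi.const_mul _), lintegral_const_mul _ hFi]
  refine add_le_add le_rfl (mul_le_mul' le_rfl ?_)
  set G := {y | y ∈ frontier Ω ∧ c ≤ inner ℝ ν y ∧ y - (inner ℝ ν y - c) • ν ∈ F} with hG
  have hGm : MeasurableSet G := by
    refine isClosed_frontier.measurableSet.inter (MeasurableSet.inter ?_ ?_)
    · have hcl : IsClosed {y : EuclideanSpace ℝ (Fin (m+1)) | c ≤ inner ℝ ν y} :=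
        isClosed_le continuous_const (by fun_prop)
      exact hcl.measurableSet
    · exact (show Continuous fun y => y - (inner ℝ ν y - c) • ν by fun_prop).measurable hFm
  -- coordinates of the foot point
  have hfoot : ∀ y, c • ν + ι (κ y) = y - (inner ℝ ν y - c) • ν := by
    intro y
    have := hdec y
    nth_rewrite 2 [← this]
    module
  let A : Set (Fin m → ℝ) := {z | c • ν + ι z ∈ F}
  have hAm : MeasurableSet A := (show Continuous fun z => c • ν + ι z by fun_prop).measurable hFm
  have hH : Measure.hausdorffMeasure (m:ℝ) = (volume : Measure (Fin m → ℝ)) := by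
    have := hausdorffMeasure_pi_real (ι := Fin m)
    simpa using this
  have hlip : LipschitzWith 1 κ := by
    refine LipschitzWith.of_dist_le_mul fun x y => ?_
    rw [dist_eq_norm, dist_eq_norm, ← map_sub, NNReal.coe_one, one_mul]
    exact hκ _
  have hsurj : ∀ z ∈ A, ∃ y ∈ G, κ y = z := by
    intro z hz
    obtain ⟨R, hR⟩ := hΩb.exists_norm_le
    set y0 := c • ν + ι z with hy0
    have hx0 : y0 ∈ Ω := hFΩ hz
    have hR0 : 0 ≤ R := (norm_nonneg _).trans (hR _ hx0)
    have hx1 : y0 + (2*R+1) • ν ∉ Ω := by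
      intro h
      have h1 := hR _ h
      have h2 := hR _ hx0
      have h3 : ‖(2*R+1) • ν‖ ≤ ‖y0 + (2*R+1) • ν‖ + ‖y0‖ := by
        have := norm_sub_le (y0 + (2*R+1) • ν) y0
        simpa using this
      rw [norm_smul, hν, mul_one, Real.norm_of_nonneg (by linarith)] at h3
      linarith
    obtain ⟨s, hs, hfr⟩ := exit_pt hx0 hx1
    have e1 : y0 + s • (y0 + (2*R+1) • ν - y0) = y0 + (s * (2*R+1)) • ν := by module
    rw [e1] at hfr
    have hr : 0 ≤ s * (2*R+1) := mul_nonneg hs.1 (by linarith)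
    set r := s * (2*R+1)
    have e2 : inner ℝ ν (y0 + r • ν) = c + r := by
      rw [inner_add_right, inner_smul_right, hν2, hyc]; ring
    refine ⟨y0 + r • ν, ⟨hfr, ?_, ?_⟩, ?_⟩
    · rw [e2]; linarith
    · rw [e2]
      have : y0 + r • ν - (c + r - c) • ν = y0 := by module
      rw [this]; exact hz
    · rw [hy0]; simp [hκν, hκι]
  have hmeas : (volume : Measure (Fin m → ℝ)).restrict A ≤
      ((Measure.hausdorffMeasure (m:ℝ)).restrict G).map κ := by
    refine Measure.le_iff.2 fun B hB => ?_
    rw [Measure.restrict_apply hB, Measure.map_apply κ.continuous.measurable hB,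
      Measure.restrict_apply (κ.continuous.measurable hB), ← hH]
    have hsub : B ∩ A ⊆ κ '' (κ ⁻¹' B ∩ G) := by
      rintro z ⟨hzB, hzA⟩
      obtain ⟨y, hy, rfl⟩ := hsurj z hzA
      exact ⟨y, ⟨hzB, hy⟩, rfl⟩
    refine (measure_mono hsub).trans ?_
    have := hlip.hausdorffMeasure_image_le (d := (m:ℝ)) (by positivity) (κ ⁻¹' B ∩ G)
    simpa using this
  have e3 : ∫⁻ z, F.indicator (fun x => ENNReal.ofReal (|v x|^p)) (c • ν + ι z) =
      ∫⁻ z in A, ENNReal.ofReal (|v (c • ν + ι z)|^p) := by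
    rw [← lintegral_indicator hAm]; rfl
  rw [e3]
  refine (lintegral_mono' hmeas le_rfl).trans ?_
  have hg4 : Measurable (fun z => ENNReal.ofReal (|v (c • ν + ι z)|^p)) :=
    hg3.comp (by fun_prop : Measurable fun z => c • ν + ι z)
  rw [lintegral_map hg4 κ.continuous.measurable]
  refine setLIntegral_mono' hGm fun y hy => ?_
  obtain ⟨h1, h2, h3⟩ := hy
  rw [hfoot]
  refine hw _ (hFΩ h3) y h1 ?_
  rw [dist_eq_norm, sub_sub_cancel_left, norm_neg, norm_smul, hν, mul_one,
    Real.norm_of_nonneg (by linarith)]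
  exact hε y h1



lemma inner_lt_one_of_ne' {E : Type*} [NormedAddCommGroup E] [InnerProductSpace ℝ E] {a b : E}
    (ha : ‖a‖ = 1) (hb : ‖b‖ = 1) (h : a ≠ b) : inner ℝ a b < (1:ℝ) :=
  inner_lt_one_iff_real_of_norm_eq_one ha hb |>.2 h

lemma lower_K {m : ℕ} {p : ℝ} (hp : 1 < p)
    {α σ : ℝ} (hα : 0 < α) (hσ : ((p-1)/p)^(p-1) * α^(1-p) ≤ σ)
    {Ω K : Set (EuclideanSpace ℝ (Fin (m+1)))} {v : EuclideanSpace ℝ (Fin (m+1)) → ℝ}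
    (hv : Measurable v) (hΩ : IsOpen Ω) (hΩb : IsBounded Ω) (hfr : (frontier Ω).Nonempty)
    (hvd : ∀ x ∈ Ω, DifferentiableAt ℝ v x)
    (hK : IsCompact K) (hKc : Convex ℝ K) (hKn : K.Nonempty) (hKΩ : K ⊆ Ω)
    {ε : ℝ} (hεK : ∀ y ∈ frontier Ω, ∃ k ∈ K, dist y k < ε)
    {w : EuclideanSpace ℝ (Fin (m+1)) → ℝ≥0∞}
    (hw : ∀ x ∈ Ω, ∀ y ∈ frontier Ω, dist x y < ε → ENNReal.ofReal (|v x|^p) ≤ w y) :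
    ENNReal.ofReal (((p-1)/p)^p) *
        ∫⁻ x in K, ENNReal.ofReal (|v x|^p/(sdist Ω x + α)^p) ≤
      (∫⁻ x in Ω, ENNReal.ofReal (‖fderiv ℝ v x‖^p)) +
        ENNReal.ofReal σ * ∫⁻ y in frontier Ω, w y ∂(Measure.hausdorffMeasure (m:ℝ)) := by
  obtain ⟨N, ν, c, hν, hinj, hKlt, hout⟩ := polytope hΩ hΩb hK hKc hKn hKΩ
  have hν2 : ∀ i, inner ℝ (ν i) (ν i) = (1:ℝ) := fun i => by
    rw [real_inner_self_eq_norm_sq, hν]; norm_num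
  have hle1 : ∀ i j, inner ℝ (ν j) (ν i) ≤ (1:ℝ) := fun i j => by
    have := real_inner_le_norm (ν j) (ν i)
    rwa [hν, hν, mul_one] at this
  have hfrΩ : ∀ y ∈ frontier Ω, y ∉ Ω := fun y hy h => by
    rw [hΩ.frontier_eq] at hy; exact hy.2 h
  have hN : Nonempty (Fin N) := by
    by_contra h
    rw [not_nonempty_iff] at h
    obtain ⟨y, hy⟩ := hfr
    exact hfrΩ y hy (hout y fun i => h.elim i)
  let d : Fin N → EuclideanSpace ℝ (Fin (m+1)) → ℝ := fun i x => c i - inner ℝ (ν i) x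
  have hdc : ∀ i, Continuous (d i) := fun i => by dsimp [d]; fun_prop
  let P : Fin N → Set (EuclideanSpace ℝ (Fin (m+1))) := fun i =>
    {x | ∀ j, 0 < d j x ∧ d i x ≤ d j x ∧ (j < i → d i x < d j x)}
  let F : Fin N → Set (EuclideanSpace ℝ (Fin (m+1))) := fun i =>
    {y | inner ℝ (ν i) y = c i ∧ ∀ j, j ≠ i → inner ℝ (ν j) y < c j}
  let G : Fin N → Set (EuclideanSpace ℝ (Fin (m+1))) := fun i =>
    {y | y ∈ frontier Ω ∧ c i ≤ inner ℝ (ν i) y ∧ y - (inner ℝ (ν i) y - c i) • ν i ∈ F i}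
  have hPm : ∀ i, MeasurableSet (P i) := by
    intro i
    have : P i = ⋂ j, ({x | 0 < d j x} ∩ ({x | d i x ≤ d j x} ∩ {x | j < i → d i x < d j x})) := by
      ext x; simp [P]
    rw [this]
    refine MeasurableSet.iInter fun j => ?_
    refine (isOpen_lt continuous_const (hdc j)).measurableSet.inter
      ((isClosed_le (hdc i) (hdc j)).measurableSet.inter ?_)
    by_cases hji : j < i
    · simpa [hji] using (isOpen_lt (hdc i) (hdc j)).measurableSet
    · simp [hji]
  have hFm : ∀ i, MeasurableSet (F i) := by
    intro i
    have : F i = {y | inner ℝ (ν i) y = c i} ∩ ⋂ j, {y | j ≠ i → inner ℝ (ν j) y < c j} := by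
      ext x; simp [F]
    rw [this]
    have h1 : IsClosed {y | inner ℝ (ν i) y = c i} := isClosed_eq (by fun_prop) continuous_const
    refine h1.measurableSet.inter (MeasurableSet.iInter fun j => ?_)
    by_cases hji : j = i
    · simp [hji]
    · have h2 : IsOpen {y | inner ℝ (ν j) y < c j} := isOpen_lt (by fun_prop) continuous_const
      simpa [hji] using h2.measurableSet
  have hGm : ∀ i, MeasurableSet (G i) := by
    intro i
    refine isClosed_frontier.measurableSet.inter (MeasurableSet.inter ?_ ?_)
    · have hcl : IsClosed {y : EuclideanSpace ℝ (Fin (m+1)) | c i ≤ inner ℝ (ν i) y} :=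
        isClosed_le continuous_const (by fun_prop)
      exact hcl.measurableSet
    · exact (show Continuous fun y => y - (inner ℝ (ν i) y - c i) • ν i by
        fun_prop).measurable (hFm i)
  have hPcl : ∀ i, closure (P i) ⊆ Ω := by
    intro i
    have h1 : IsClosed {x | ∀ j, inner ℝ (ν j) x ≤ c j} := by
      simp only [Set.ofPred_forall]
      exact isClosed_iInter fun j => isClosed_le (by fun_prop) continuous_const
    have h2 : P i ⊆ {x | ∀ j, inner ℝ (ν j) x ≤ c j} := by
      intro x hx j
      have := (hx j).1
      simp only [d] at this
      linarith
    exact (closure_minimal h2 h1).trans fun x hx => hout x hx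
  have hFΩ : ∀ i, F i ⊆ Ω := by
    intro i y hy
    refine hout y fun j => ?_
    by_cases hji : j = i
    · rw [hji]; exact hy.1.le
    · exact (hy.2 j hji).le
  have hcell : ∀ i, ENNReal.ofReal (((p-1)/p)^p) *
        ∫⁻ x in P i, ENNReal.ofReal (|v x|^p/(sdist Ω x + α)^p) ≤
      (∫⁻ x in P i, ENNReal.ofReal (‖fderiv ℝ v x‖^p)) +
        ENNReal.ofReal σ * ∫⁻ y in G i, w y ∂(Measure.hausdorffMeasure (m:ℝ)) := by
    intro i
    refine cell (F := F i) (c := c i) (ε := ε) hp hα hσ hv ?_ hΩb hvd (hν i) (hPm i) (hFm i) (hPcl i)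
      (fun x hx => (hx i).1) ?_ ?_ ?_ (fun y hy => hy.1) (hFΩ i) ?_ hw
    · exact (continuous_infDist_pt _).measurable
    · intro x hx
      have h0 : 0 < d i x := (hx i).1
      refine ⟨?_, fun j hj => ?_⟩
      · rw [inner_add_right, inner_smul_right, hν2]; ring
      · rw [inner_add_right, inner_smul_right]
        have h1 := (hx j).2.1
        simp only [d] at h1 h0
        by_cases he : ν j = ν i
        · have hcne : c j ≠ c i := fun h => hj (hinj j i he h)
          rw [he, hν2]
          rw [he] at h1
          have : c i < c j := lt_of_le_of_ne (by linarith) (Ne.symm hcne)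
          linarith
        · have := inner_lt_one_of_ne' (hν j) (hν i) he
          nlinarith
    · intro y hy t ht s hs hst j
      have key : ∀ (j) (r : ℝ), d j (y - r • ν i) = d j y + r * inner ℝ (ν j) (ν i) := by
        intro j r
        simp only [d]
        rw [inner_sub_right, inner_smul_right]; ring
      have hi0 : d i y = 0 := by simp only [d]; rw [hy.1]; ring
      have h1 := (ht j).2.1
      have h2 := (ht j).2.2
      rw [key, key, hν2, hi0] at h1 h2
      rw [key, key, hν2, hi0]
      have h3 := hle1 i j
      have h4 : 0 ≤ (t - s) * (1 - inner ℝ (ν j) (ν i)) :=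
        mul_nonneg (by linarith) (by linarith)
      refine ⟨by linarith, by linarith, fun hji => ?_⟩
      have := h2 hji
      linarith
    · intro x hx
      refine (le_infDist hfr).2 fun y hy => ?_
      have h1 : ∃ j, c j < inner ℝ (ν j) y := by
        by_contra h
        push Not at h
        exact hfrΩ y hy (hout y h)
      obtain ⟨j, hj⟩ := h1
      have h2 := (hx j).2.1
      have h3 := real_inner_le_norm (ν j) (y - x)
      rw [hν, one_mul, inner_sub_right] at h3
      rw [dist_comm, dist_eq_norm]
      simp only [d] at h2
      linarith
    · intro y hy
      obtain ⟨k, hk, hyk⟩ := hεK y hy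
      have h3 := real_inner_le_norm (ν i) (y - k)
      rw [hν, one_mul, inner_sub_right] at h3
      rw [dist_eq_norm] at hyk
      have := hKlt k hk i
      linarith
  have hKP : K ⊆ ⋃ i, P i := by
    intro x hx
    classical
    obtain ⟨i0, -, hi0⟩ := Finset.exists_min_image Finset.univ (fun i => d i x)
      Finset.univ_nonempty
    let T := Finset.univ.filter fun i => ∀ j, d i x ≤ d j x
    have hT : T.Nonempty := ⟨i0, by simpa [T] using hi0⟩
    have hmem : ∀ j, d (T.min' hT) x ≤ d j x := by
      have := T.min'_mem hT
      simpa [T] using this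
    refine mem_iUnion.2 ⟨T.min' hT, fun j => ⟨?_, hmem j, fun hj => ?_⟩⟩
    · have := hKlt x hx j
      simp only [d]; linarith
    · by_contra hcon
      push Not at hcon
      have : j ∈ T := by
        simp only [T, Finset.mem_filter, Finset.mem_univ, true_and]
        exact fun k => hcon.trans (hmem k)
      exact absurd (T.min'_le j this) (not_le.2 hj)
  have hPd : Pairwise (Function.onFun Disjoint P) := by
    intro i j hij
    refine Set.disjoint_left.2 fun x hx hx' => ?_
    rcases lt_or_gt_of_ne hij with h | h
    · exact absurd ((hx' i).2.2 h) (not_lt.2 (hx j).2.1)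
    · exact absurd ((hx j).2.2 h) (not_lt.2 (hx' i).2.1)
  have hGd : Pairwise (Function.onFun Disjoint G) := by
    intro i j hij
    refine Set.disjoint_left.2 fun y hy hy' => ?_
    obtain ⟨-, h1, h2⟩ := hy
    obtain ⟨-, h1', h2'⟩ := hy'
    set s := inner ℝ (ν i) y - c i with hs
    set r := inner ℝ (ν j) y - c j with hr
    have a1 := h2.1
    have a2 := h2.2 j hij.symm
    have b1 := h2'.1
    have b2 := h2'.2 i hij
    set f := y - s • ν i
    set g := y - r • ν j
    have e : f - g = r • ν j - s • ν i := by simp only [f, g]; abel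
    have h3 : ‖f - g‖^2 = r * (inner ℝ (ν j) f - inner ℝ (ν j) g) +
        s * (inner ℝ (ν i) g - inner ℝ (ν i) f) := by
      rw [← real_inner_self_eq_norm_sq]
      nth_rewrite 1 [e]
      rw [inner_sub_left, inner_smul_left, inner_smul_left, inner_sub_right (ν j) f g, inner_sub_right (ν i) f g]
      simp only [conj_trivial]
      ring
    have h4 : ‖f - g‖^2 ≤ 0 := by
      rw [h3]
      have hs0 : 0 ≤ s := by linarith
      have hr0 : 0 ≤ r := by linarith
      nlinarith
    have h5 : f = g := by
      have : ‖f - g‖ = 0 := by nlinarith [norm_nonneg (f - g)]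
      exact sub_eq_zero.1 (norm_eq_zero.1 this)
    rw [h5] at a2
    linarith
  calc _ ≤ ENNReal.ofReal (((p-1)/p)^p) *
        ∫⁻ x in ⋃ i, P i, ENNReal.ofReal (|v x|^p/(sdist Ω x + α)^p) :=
        mul_le_mul' le_rfl (lintegral_mono_set hKP)
    _ = ∑ i, ENNReal.ofReal (((p-1)/p)^p) *
        ∫⁻ x in P i, ENNReal.ofReal (|v x|^p/(sdist Ω x + α)^p) := by
        rw [lintegral_iUnion hPm hPd, tsum_fintype, Finset.mul_sum]
    _ ≤ ∑ i, ((∫⁻ x in P i, ENNReal.ofReal (‖fderiv ℝ v x‖^p)) +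
        ENNReal.ofReal σ * ∫⁻ y in G i, w y ∂(Measure.hausdorffMeasure (m:ℝ))) :=
        Finset.sum_le_sum fun i _ => hcell i
    _ = (∫⁻ x in ⋃ i, P i, ENNReal.ofReal (‖fderiv ℝ v x‖^p)) +
        ENNReal.ofReal σ * ∫⁻ y in ⋃ i, G i, w y ∂(Measure.hausdorffMeasure (m:ℝ)) := by
        rw [lintegral_iUnion hPm hPd, lintegral_iUnion hGm hGd, tsum_fintype, tsum_fintype,
          Finset.sum_add_distrib, Finset.mul_sum]
    _ ≤ _ := by
        refine add_le_add (lintegral_mono_set ?_) (mul_le_mul' le_rfl (lintegral_mono_set ?_))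
        · exact iUnion_subset fun i => subset_closure.trans (hPcl i)
        · exact iUnion_subset fun i y hy => hy.1



lemma frontier_nonempty' {m : ℕ} {Ω : Set (EuclideanSpace ℝ (Fin (m+1)))} (hne : Ω.Nonempty)
    (hbd : IsBounded Ω) : (frontier Ω).Nonempty := by
  obtain ⟨x, hx⟩ := hne
  have : Ω ≠ univ := by
    intro h
    rw [h] at hbd
    exact NormedSpace.unbounded_univ ℝ (EuclideanSpace ℝ (Fin (m+1))) hbd
  obtain ⟨y, hy⟩ := (ne_univ_iff_exists_notMem Ω).1 this
  obtain ⟨s, -, hs⟩ := exit_pt hx hy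
  exact ⟨_, hs⟩

lemma lower_eta {m : ℕ} {p : ℝ} (hp : 1 < p)
    {α σ : ℝ} (hα : 0 < α) (hσ : ((p-1)/p)^(p-1) * α^(1-p) ≤ σ)
    {Ω : Set (EuclideanSpace ℝ (Fin (m+1)))} {u : EuclideanSpace ℝ (Fin (m+1)) → ℝ}
    (hΩ : IsOpen Ω) (hne : Ω.Nonempty) (hbd : IsBounded Ω) (hconv : Convex ℝ Ω)
    (huc : ContinuousOn u (closure Ω)) (hud : ∀ x ∈ Ω, DifferentiableAt ℝ u x)
    {η : ℝ} (hη : 0 < η) :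
    ENNReal.ofReal (((p-1)/p)^p) *
        ∫⁻ x in Ω, ENNReal.ofReal (|u x|^p/(sdist Ω x + α)^p) ≤
      (∫⁻ x in Ω, ENNReal.ofReal (‖fderiv ℝ u x‖^p)) +
        ENNReal.ofReal σ * ∫⁻ y in frontier Ω, (ENNReal.ofReal (|u y|^p) + ENNReal.ofReal η)
          ∂(Measure.hausdorffMeasure (m:ℝ)) := by
  have hp0 : 0 < p := by linarith
  have hcomp : IsCompact (closure Ω) := hbd.isCompact_closure
  have hφ : ContinuousOn (fun x => |u x|^p) (closure Ω) :=
    (huc.abs).rpow_const fun x _ => Or.inr hp0.le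
  have hunif := hcomp.uniformContinuousOn_of_continuous hφ
  obtain ⟨ε, hε, hεη⟩ := Metric.uniformContinuousOn_iff.1 hunif η hη
  let v : EuclideanSpace ℝ (Fin (m+1)) → ℝ := Ω.indicator u
  have hvu : ∀ x ∈ Ω, v =ᶠ[𝓝 x] u := by
    intro x hx
    filter_upwards [hΩ.mem_nhds hx] with y hy
    exact indicator_of_mem hy u
  have hv : Measurable v := by
    classical
    have := (huc.mono subset_closure).measurable_piecewise
      (continuousOn_const (c := (0:ℝ)) (s := Ωᶜ)) hΩ.measurableSet
    convert this using 1
    ext x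
    simp [v, indicator, piecewise]
  have hvd : ∀ x ∈ Ω, DifferentiableAt ℝ v x := fun x hx =>
    (hvu x hx).differentiableAt_iff.2 (hud x hx)
  obtain ⟨x0, hx0⟩ := hne
  let r : ℕ → ℝ := fun k => 1 - 1/((k:ℝ)+2)
  have hr0 : ∀ k, 0 < r k := by
    intro k
    have : 1/((k:ℝ)+2) < 1 := by
      rw [div_lt_one (by positivity)]; linarith [(Nat.cast_nonneg k : (0:ℝ) ≤ k)]
    simp only [r]; linarith
  have hr1 : ∀ k, r k < 1 := by
    intro k
    have : 0 < 1/((k:ℝ)+2) := by positivity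
    simp only [r]; linarith
  have hrt : Tendsto r atTop (𝓝 1) := by
    have h1 : Tendsto (fun k : ℕ => 1/((k:ℝ)+2)) atTop (𝓝 0) :=
      tendsto_const_nhds.div_atTop
        (tendsto_atTop_add_const_right _ _ tendsto_natCast_atTop_atTop)
    have := h1.const_sub 1
    simpa [r] using this
  let T : ℕ → EuclideanSpace ℝ (Fin (m+1)) → EuclideanSpace ℝ (Fin (m+1)) :=
    fun k x => (1 - r k) • x0 + r k • x
  let K : ℕ → Set (EuclideanSpace ℝ (Fin (m+1))) := fun k => T k '' closure Ω
  have hTc : ∀ k, Continuous (T k) := fun k => by simp only [T]; fun_prop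
  have hKc : ∀ k, IsCompact (K k) := fun k => hcomp.image (hTc k)
  have hKconv : ∀ k, Convex ℝ (K k) := by
    intro k
    rintro _ ⟨x, hx, rfl⟩ _ ⟨y, hy, rfl⟩ a b ha hb hab
    refine ⟨a • x + b • y, hconv.closure hx hy ha hb hab, ?_⟩
    simp only [T]
    have hb' : b = 1 - a := by linarith
    rw [hb']
    module
  have hKn : ∀ k, (K k).Nonempty := fun k => ⟨_, x0, subset_closure hx0, rfl⟩
  have hKΩ : ∀ k, K k ⊆ Ω := by
    rintro k _ ⟨x, hx, rfl⟩
    have := hconv.combo_interior_closure_mem_interior (x := x0) (y := x) (a := 1 - r k) (b := r k)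
      (by rwa [hΩ.interior_eq]) hx (by linarith [hr1 k]) (hr0 k).le (by ring)
    rwa [hΩ.interior_eq] at this
  obtain ⟨D, hD⟩ := hcomp.isBounded.exists_norm_le
  have hev : ∀ᶠ k in atTop, (1 - r k) * (D + ‖x0‖) < ε := by
    have h1 : Tendsto (fun k => (1 - r k) * (D + ‖x0‖)) atTop (𝓝 ((1-1) * (D + ‖x0‖))) :=
      (hrt.const_sub 1).mul_const _
    rw [sub_self, zero_mul] at h1
    exact h1.eventually (gt_mem_nhds hε)
  set B := (∫⁻ x in Ω, ENNReal.ofReal (‖fderiv ℝ u x‖^p)) +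
        ENNReal.ofReal σ * ∫⁻ y in frontier Ω, (ENNReal.ofReal (|u y|^p) + ENNReal.ofReal η)
          ∂(Measure.hausdorffMeasure (m:ℝ)) with hB
  let g : EuclideanSpace ℝ (Fin (m+1)) → ℝ≥0∞ := fun x => ENNReal.ofReal (((p-1)/p)^p) *
    ENNReal.ofReal (|v x|^p/(sdist Ω x + α)^p)
  have hsm : Measurable (sdist Ω) := (continuous_infDist_pt _).measurable
  have hg : Measurable g := by fun_prop
  have hkk : ∀ᶠ k in atTop, ∫⁻ x, (K k).indicator g x ≤ B := by
    filter_upwards [hev] with k hk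
    rw [lintegral_indicator (hKc k).measurableSet]
    simp only [g]
    rw [lintegral_const_mul' _ _ ENNReal.ofReal_ne_top]
    have h1 := lower_K (w := fun y => ENNReal.ofReal (|u y|^p) + ENNReal.ofReal η)
      (ε := ε) hp hα hσ hv hΩ hbd (frontier_nonempty' ⟨x0, hx0⟩ hbd) hvd
      (hKc k) (hKconv k) (hKn k) (hKΩ k) ?_ ?_
    · refine h1.trans (le_of_eq ?_)
      rw [hB]
      congr 1
      refine setLIntegral_congr_fun hΩ.measurableSet fun x hx => ?_
      rw [(hvu x hx).fderiv_eq]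
    · intro y hy
      have hyc : y ∈ closure Ω := frontier_subset_closure hy
      refine ⟨T k y, ⟨y, hyc, rfl⟩, lt_of_le_of_lt ?_ hk⟩
      have : y - T k y = (1 - r k) • (y - x0) := by simp only [T]; module
      rw [dist_eq_norm, this, norm_smul, Real.norm_of_nonneg (by linarith [hr1 k])]
      refine mul_le_mul_of_nonneg_left ?_ (by linarith [hr1 k])
      exact (norm_sub_le _ _).trans (by linarith [hD y hyc])
    · intro x hx y hy hxy
      have := hεη x (subset_closure hx) y (frontier_subset_closure hy) hxy
      rw [Real.dist_eq, abs_lt] at this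
      rw [← ENNReal.ofReal_add (by positivity) hη.le]
      refine ENNReal.ofReal_le_ofReal ?_
      simp only [v]
      rw [indicator_of_mem hx]
      linarith [this.2]
  have hpt : ∀ x, Ω.indicator g x ≤ liminf (fun k => (K k).indicator g x) atTop := by
    intro x
    by_cases hx : x ∈ Ω
    · have h1 : ∀ᶠ k in atTop, x ∈ K k := by
        have h2 : Tendsto (fun k => x0 + (r k)⁻¹ • (x - x0)) atTop (𝓝 (x0 + (1:ℝ)⁻¹ • (x - x0))) :=
          ((hrt.inv₀ one_ne_zero).smul_const _).const_add _
        rw [inv_one, one_smul, add_sub_cancel] at h2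
        filter_upwards [h2.eventually (hΩ.mem_nhds hx)] with k hk
        refine ⟨_, subset_closure hk, ?_⟩
        simp only [T]
        rw [smul_add, smul_smul, mul_inv_cancel₀ (hr0 k).ne']
        module
      refine le_of_eq ?_
      symm
      apply Tendsto.liminf_eq
      refine tendsto_const_nhds.congr' ?_
      filter_upwards [h1] with k hk
      rw [indicator_of_mem hx, indicator_of_mem hk]
    · rw [indicator_of_notMem hx]; exact zero_le
  have hfin : ∫⁻ x, Ω.indicator g x ≤ B := by
    refine (lintegral_mono hpt).trans ((lintegral_liminf_le fun k =>
      hg.indicator (hKc k).measurableSet).trans ?_)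
    exact liminf_le_of_frequently_le' hkk.frequently
  refine le_trans (le_of_eq ?_) hfin
  rw [lintegral_indicator hΩ.measurableSet]
  simp only [g]
  rw [lintegral_const_mul' _ _ ENNReal.ofReal_ne_top]
  congr 1
  refine setLIntegral_congr_fun hΩ.measurableSet fun x hx => ?_
  simp only [v]
  rw [indicator_of_mem hx]

lemma lower_all {m : ℕ} {p : ℝ} (hp : 1 < p)
    {α σ : ℝ} (hα : 0 < α) (hσ : ((p-1)/p)^(p-1) * α^(1-p) ≤ σ)
    {Ω : Set (EuclideanSpace ℝ (Fin (m+1)))} {u : EuclideanSpace ℝ (Fin (m+1)) → ℝ}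
    (hΩ : IsOpen Ω) (hne : Ω.Nonempty) (hbd : IsBounded Ω) (hconv : Convex ℝ Ω)
    (huc : ContinuousOn u (closure Ω)) (hud : ∀ x ∈ Ω, DifferentiableAt ℝ u x) :
    ENNReal.ofReal (((p-1)/p)^p) *
        ∫⁻ x in Ω, ENNReal.ofReal (|u x|^p/(sdist Ω x + α)^p) ≤
      (∫⁻ x in Ω, ENNReal.ofReal (‖fderiv ℝ u x‖^p)) +
        ENNReal.ofReal σ * ∫⁻ y in frontier Ω, ENNReal.ofReal (|u y|^p)
          ∂(Measure.hausdorffMeasure (m:ℝ)) := by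
  have hH := frontier_finite hΩ hne hbd hconv
  have h0 : Tendsto (fun η : ℝ => ENNReal.ofReal η) (𝓝[>] 0) (𝓝 0) := by
    have := (ENNReal.continuous_ofReal.tendsto 0).mono_left (nhdsWithin_le_nhds (s := Ioi (0:ℝ)))
    simpa using this
  have h1 : Tendsto (fun η : ℝ => (∫⁻ x in Ω, ENNReal.ofReal (‖fderiv ℝ u x‖^p)) +
        ENNReal.ofReal σ * ((∫⁻ y in frontier Ω, ENNReal.ofReal (|u y|^p)
          ∂(Measure.hausdorffMeasure (m:ℝ))) +
          ENNReal.ofReal η * Measure.hausdorffMeasure (m:ℝ) (frontier Ω))) (𝓝[>] 0)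
      (𝓝 ((∫⁻ x in Ω, ENNReal.ofReal (‖fderiv ℝ u x‖^p)) +
        ENNReal.ofReal σ * ((∫⁻ y in frontier Ω, ENNReal.ofReal (|u y|^p)
          ∂(Measure.hausdorffMeasure (m:ℝ))) +
          0 * Measure.hausdorffMeasure (m:ℝ) (frontier Ω)))) := by
    refine tendsto_const_nhds.add (ENNReal.Tendsto.const_mul
      (tendsto_const_nhds.add (ENNReal.Tendsto.mul_const h0 (Or.inr hH.ne))) (Or.inr ENNReal.ofReal_ne_top))
  rw [zero_mul, add_zero] at h1
  refine ge_of_tendsto h1 ?_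
  filter_upwards [self_mem_nhdsWithin] with η hη
  refine (lower_eta hp hα hσ hΩ hne hbd hconv huc hud hη).trans (le_of_eq ?_)
  rw [lintegral_add_right _ measurable_const, setLIntegral_const]

lemma alphaC_pos {p σ : ℝ} (hp : 1 < p) (hσ : 0 < σ) : 0 < alphaC p σ :=
  mul_pos (div_pos (by linarith) (by linarith)) (Real.rpow_pos_of_pos hσ _)

lemma alphaC_id {p σ : ℝ} (hp : 1 < p) (hσ : 0 < σ) :
    ((p-1)/p)^(p-1) * (alphaC p σ)^(1-p) = σ := by
  have hc : 0 < (p-1)/p := div_pos (by linarith) (by linarith)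
  unfold alphaC
  rw [Real.mul_rpow hc.le (Real.rpow_nonneg hσ.le _), ← Real.rpow_mul hσ.le, ← mul_assoc,
    ← Real.rpow_add hc, one_div_mul_cancel (by linarith)]
  simp

lemma lower_lam {m : ℕ} {p : ℝ} (hp : 1 < p) {σ : ℝ} (hσ : 0 < σ)
    {Ω : Set (EuclideanSpace ℝ (Fin (m+1)))}
    (hΩ : IsOpen Ω) (hne : Ω.Nonempty) (hbd : IsBounded Ω) (hconv : Convex ℝ Ω) :
    ENNReal.ofReal (((p-1)/p)^p) ≤ lamC p Ω σ := by
  have hα := alphaC_pos hp hσ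
  unfold lamC
  refine le_iInf fun u => le_iInf fun hu => le_iInf fun hw => ?_
  have hfin : wnormC p Ω σ u ≠ ∞ := by
    have h1 : wnormC p Ω σ u ≤
        ENNReal.ofReal (((alphaC p σ)^p)⁻¹) * ∫⁻ x in Ω, ENNReal.ofReal (|u x|^p) := by
      unfold wnormC
      rw [← lintegral_const_mul' _ _ ENNReal.ofReal_ne_top]
      refine lintegral_mono fun x => ?_
      rw [← ENNReal.ofReal_mul (by positivity)]
      refine ENNReal.ofReal_le_ofReal ?_
      rw [div_eq_mul_inv, mul_comm]
      refine mul_le_mul_of_nonneg_right ?_ (by positivity)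
      refine inv_anti₀ (by positivity) (Real.rpow_le_rpow hα.le ?_ (by linarith))
      have : 0 ≤ sdist Ω x := infDist_nonneg
      linarith
    exact ne_top_of_le_ne_top (ENNReal.mul_ne_top ENNReal.ofReal_ne_top hu.2.2.1) h1
  rw [ENNReal.le_div_iff_mul_le (Or.inl hw) (Or.inl hfin)]
  have := lower_all hp hα (alphaC_id hp hσ).le hΩ hne hbd hconv hu.1 hu.2.1
  have hm : ((m+1:ℕ):ℝ) - 1 = m := by push_cast; ring
  unfold QpC surf
  rw [hm]
  exact this



lemma lin_neg {E : Type*} [NormedAddCommGroup E] [NormedSpace ℝ E] {f : E → ℝ} {y0 : E}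
    {L : E →L[ℝ] ℝ} (hf : HasFDerivAt f L y0) (hf0 : f y0 = 0) {S : Set E} (hS : IsCompact S)
    (hL : ∀ z ∈ S, L z < 0) {U : Set E} (hU : U ∈ 𝓝 y0) :
    ∀ᶠ r : ℝ in 𝓝[>] 0, ∀ z ∈ S, y0 + r • z ∈ U ∧ f (y0 + r • z) < 0 := by
  rcases S.eq_empty_or_nonempty with h | hSn
  · simp [h]
  obtain ⟨z1, hz1, hmax⟩ := hS.exists_isMaxOn hSn L.continuous.continuousOn
  set k := - L z1 with hk
  have hk0 : 0 < k := by have := hL z1 hz1; linarith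
  obtain ⟨R, hR⟩ := hS.isBounded.exists_norm_le
  have hR0 : 0 ≤ R := (norm_nonneg _).trans (hR z1 hz1)
  have hev := (hf.isLittleO.def (c := k/(2*(R+1))) (by positivity)).and hU
  obtain ⟨ε, hε, hball⟩ := Metric.mem_nhds_iff.1 hev
  have h1 : ∀ᶠ r : ℝ in 𝓝[>] 0, r < ε/(R+1) :=
    (gt_mem_nhds (by positivity : 0 < ε/(R+1))).filter_mono nhdsWithin_le_nhds
  filter_upwards [h1, self_mem_nhdsWithin] with r hr hr0 z hz
  have hr0' : (0:ℝ) < r := hr0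
  have hn : ‖r • z‖ ≤ r * R := by
    rw [norm_smul, Real.norm_of_nonneg hr0'.le]
    exact mul_le_mul_of_nonneg_left (hR z hz) hr0'.le
  have hmem : y0 + r • z ∈ ball y0 ε := by
    rw [mem_ball, dist_eq_norm, add_sub_cancel_left]
    rw [lt_div_iff₀ (by positivity)] at hr
    nlinarith
  obtain ⟨h2, h3⟩ := hball hmem
  refine ⟨h3, ?_⟩
  rw [add_sub_cancel_left, hf0, sub_zero, map_smul, smul_eq_mul] at h2
  have h4 := (abs_le.1 (Real.norm_eq_abs _ ▸ h2)).2
  have h5 : L z ≤ L z1 := hmax hz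
  have h6 : k/(2*(R+1)) * ‖r • z‖ ≤ r * k / 2 := by
    have : k/(2*(R+1)) * ‖r • z‖ ≤ k/(2*(R+1)) * (r * (R+1)) := by
      refine mul_le_mul_of_nonneg_left ?_ (by positivity)
      nlinarith
    refine this.trans (le_of_eq ?_)
    field_simp
  have h7 : r * L z ≤ r * (-k) := mul_le_mul_of_nonneg_left (by linarith) hr0'.le
  have : 0 < r * k := mul_pos hr0' hk0
  linarith

lemma geom {m : ℕ} {Ω : Set (EuclideanSpace ℝ (Fin (m+1)))}
    (hΩ : IsOpen Ω) (hne : Ω.Nonempty) (hbd : IsBounded Ω) (hconv : Convex ℝ Ω)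
    (hC2 : HasC2Boundary Ω) : ∃ y0 e : EuclideanSpace ℝ (Fin (m+1)), ‖e‖ = 1 ∧
      (∀ x ∈ Ω, 0 < inner ℝ e (x - y0)) ∧ (∀ x ∈ Ω, sdist Ω x ≤ inner ℝ e (x - y0)) ∧
      ∀ S : Set (EuclideanSpace ℝ (Fin (m+1))), IsCompact S → (∀ z ∈ S, 0 < inner ℝ e z) →
        ∀ᶠ r : ℝ in 𝓝[>] 0, ∀ z ∈ S, y0 + r • z ∈ Ω := by
  obtain ⟨y0, hy0⟩ := frontier_nonempty' hne hbd
  obtain ⟨U, f, hU, hyU, hf, hdf, hfΩ, hfF⟩ := hC2 y0 hy0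
  have hf0 : f y0 = 0 := by
    have : y0 ∈ frontier Ω ∩ U := ⟨hy0, hyU⟩
    rw [hfF] at this
    exact this.2
  have hfd : HasFDerivAt f (fderiv ℝ f y0) y0 :=
    (hf.differentiable (by norm_num)).differentiableAt.hasFDerivAt
  set L := fderiv ℝ f y0 with hL
  set g := (InnerProductSpace.toDual ℝ (EuclideanSpace ℝ (Fin (m+1)))).symm L with hg
  have hgL : ∀ z, inner ℝ g z = L z := fun z => InnerProductSpace.toDual_symm_apply
  have hg0 : g ≠ 0 := by
    intro h
    apply hdf y0 hyU
    ext z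
    rw [← hL, ← hgL, h]; simp
  have hgn : 0 < ‖g‖ := norm_pos_iff.2 hg0
  let e := -(‖g‖⁻¹ • g)
  have hez : ∀ z, inner ℝ e z = -(‖g‖⁻¹ * L z) := by
    intro z
    simp only [e]
    rw [inner_neg_left, inner_smul_left, hgL]; simp
  have he : ‖e‖ = 1 := by
    simp only [e]
    rw [norm_neg, norm_smul, norm_inv, norm_norm, inv_mul_cancel₀ hgn.ne']
  have hpos : ∀ x ∈ Ω, 0 < inner ℝ e (x - y0) := by
    intro x hx
    rw [hez]
    by_contra hcon
    have h0 : 0 ≤ L (x - y0) := by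
      by_contra h
      push Not at h
      have : 0 < ‖g‖⁻¹ * (-L (x - y0)) := mul_pos (by positivity) (by linarith)
      linarith
    have h1 : Tendsto (fun τ : ℝ => x + τ • g) (𝓝[>] 0) (𝓝 x) := by
      have : Tendsto (fun τ : ℝ => x + τ • g) (𝓝 0) (𝓝 (x + (0:ℝ) • g)) :=
        (Continuous.tendsto (by fun_prop) 0)
      rw [zero_smul, add_zero] at this
      exact this.mono_left nhdsWithin_le_nhds
    obtain ⟨τ, hτΩ, hτ⟩ := ((h1.eventually (hΩ.mem_nhds hx)).and self_mem_nhdsWithin).exists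
    have hτ0 : (0:ℝ) < τ := hτ
    set x' := x + τ • g with hx'
    have h2 : 0 < L (x' - y0) := by
      have : x' - y0 = (x - y0) + τ • g := by rw [hx']; abel
      rw [this, map_add, map_smul, smul_eq_mul, ← hgL g, real_inner_self_eq_norm_sq]
      positivity
    have h3 := lin_neg (f := fun x => - f x) hfd.neg (by simp [hf0]) (isCompact_singleton (x := x' - y0))
      (by intro z hz; rw [mem_singleton_iff.1 hz]; simpa using h2) (hU.mem_nhds hyU)
    have h4 : ∀ᶠ r : ℝ in 𝓝[>] 0, r < 1 :=
      (gt_mem_nhds (by norm_num : (0:ℝ) < 1)).filter_mono nhdsWithin_le_nhds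
    obtain ⟨r, ⟨hr, hr1⟩, hr0⟩ := ((h3.and h4).and self_mem_nhdsWithin).exists
    obtain ⟨h5, h6⟩ := hr _ rfl
    have hr0' : (0:ℝ) < r := hr0
    have h7 : y0 + r • (x' - y0) ∈ Ω := by
      have := hconv.combo_interior_closure_mem_interior (x := x') (y := y0) (a := r) (b := 1 - r)
        (by rwa [hΩ.interior_eq]) (frontier_subset_closure hy0) hr0' (by linarith) (by ring)
      rw [hΩ.interior_eq] at this
      convert this using 1
      module
    have h8 : y0 + r • (x' - y0) ∈ Ω ∩ U := ⟨h7, h5⟩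
    rw [hfΩ] at h8
    have := h8.2
    linarith
  refine ⟨y0, e, he, hpos, ?_, ?_⟩
  · intro x hx
    set t := inner ℝ e (x - y0) with ht
    have ht0 : 0 < t := hpos x hx
    have h1 : x - t • e ∉ Ω := by
      intro h
      have := hpos _ h
      rw [show x - t • e - y0 = (x - y0) - t • e by abel, inner_sub_right, inner_smul_right,
        real_inner_self_eq_norm_sq, he, ← ht] at this
      norm_num at this
    obtain ⟨s, hs, hsf⟩ := exit_pt hx h1
    refine (infDist_le_dist_of_mem hsf).trans ?_
    rw [dist_eq_norm]
    have : x - (x + s • (x - t • e - x)) = (s * t) • e := by module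
    rw [this, norm_smul, he, mul_one, Real.norm_of_nonneg (mul_nonneg hs.1 ht0.le)]
    nlinarith [hs.2]
  · intro S hS hSp
    have h1 := lin_neg hfd hf0 hS (fun z hz => by
      have := hSp z hz
      rw [hez] at this
      by_contra h
      push Not at h
      have : 0 ≤ ‖g‖⁻¹ * L z := mul_nonneg (by positivity) h
      linarith) (hU.mem_nhds hyU)
    filter_upwards [h1] with r hr z hz
    have : y0 + r • z ∈ {y ∈ U | f y < 0} := hr z hz
    rw [← hfΩ] at this
    exact this.1

lemma inv_int {a b : ℝ} (ha : 0 < a) (hab : a ≤ b) :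
    ∫⁻ t in Icc a b, ENNReal.ofReal (t⁻¹) = ENNReal.ofReal (Real.log (b/a)) := by
  have hb : 0 < b := ha.trans_le hab
  rw [← integral_inv_of_pos ha hb, intervalIntegral.integral_of_le hab,
    ← MeasureTheory.integral_Icc_eq_integral_Ioc]
  refine (ofReal_integral_eq_lintegral_ofReal ?_ ?_).symm
  · refine ContinuousOn.integrableOn_Icc ?_
    exact continuousOn_id.inv₀ fun x hx => (ha.trans_le hx.1).ne'
  · exact (ae_restrict_iff' measurableSet_Icc).2 (Eventually.of_forall fun t ht =>
      inv_nonneg.2 (ha.trans_le ht.1).le)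

def box {m : ℕ} (e y0 : EuclideanSpace ℝ (Fin (m+1)))
    (κ : EuclideanSpace ℝ (Fin (m+1)) →L[ℝ] (Fin m → ℝ)) (a b ρ : ℝ) :
    Set (EuclideanSpace ℝ (Fin (m+1))) :=
  {x | (a ≤ inner ℝ e (x - y0) ∧ inner ℝ e (x - y0) ≤ b) ∧ ‖κ (x - y0)‖ ≤ ρ}

lemma mem_box {m : ℕ} {e y0 : EuclideanSpace ℝ (Fin (m+1))}
    {κ : EuclideanSpace ℝ (Fin (m+1)) →L[ℝ] (Fin m → ℝ)} {a b ρ : ℝ}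
    {x : EuclideanSpace ℝ (Fin (m+1))} : x ∈ box e y0 κ a b ρ ↔
    (a ≤ inner ℝ e (x - y0) ∧ inner ℝ e (x - y0) ≤ b) ∧ ‖κ (x - y0)‖ ≤ ρ := Iff.rfl

lemma isClosed_box {m : ℕ} (e y0 : EuclideanSpace ℝ (Fin (m+1)))
    (κ : EuclideanSpace ℝ (Fin (m+1)) →L[ℝ] (Fin m → ℝ)) (a b ρ : ℝ) :
    IsClosed (box e y0 κ a b ρ) := by
  have h1 : IsClosed {x | a ≤ inner ℝ e (x - y0)} := isClosed_le continuous_const (by fun_prop)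
  have h2 : IsClosed {x | inner ℝ e (x - y0) ≤ b} := isClosed_le (by fun_prop) continuous_const
  have h3 : IsClosed {x | ‖κ (x - y0)‖ ≤ ρ} := isClosed_le (by fun_prop) continuous_const
  exact (h1.inter h2).inter h3

lemma boxint {m : ℕ} {e y0 : EuclideanSpace ℝ (Fin (m+1))} (he : ‖e‖ = 1)
    {κ : EuclideanSpace ℝ (Fin (m+1)) →L[ℝ] (Fin m → ℝ)}
    {ι : (Fin m → ℝ) →L[ℝ] EuclideanSpace ℝ (Fin (m+1))}
    (hκι : ∀ z, κ (ι z) = z) (hκν : κ e = 0) (hνι : ∀ z, inner ℝ e (ι z) = (0:ℝ))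
    (hfub : ∀ G : EuclideanSpace ℝ (Fin (m+1)) → ℝ≥0∞, Measurable G →
      ∫⁻ x, G x = ∫⁻ z, ∫⁻ t : ℝ, G (t • e + ι z))
    {a b ρ : ℝ} (ha : 0 < a) (hab : a ≤ b) (hρ : 0 ≤ ρ) :
    ∫⁻ x in box e y0 κ a b ρ,
      ENNReal.ofReal ((inner ℝ e (x - y0))⁻¹) =
    ENNReal.ofReal (Real.log (b/a)) * ENNReal.ofReal ((2*ρ)^m) := by
  set S := box e y0 κ a b ρ with hS
  have hSm : MeasurableSet S := (isClosed_box e y0 κ a b ρ).measurableSet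
  rw [← lintegral_indicator hSm, ← lintegral_add_right_eq_self _ y0]
  have hm : Measurable (fun x => ENNReal.ofReal ((inner ℝ e (x - y0))⁻¹)) := by fun_prop
  have hm2 : Measurable (fun x => S.indicator
      (fun x => ENNReal.ofReal ((inner ℝ e (x - y0))⁻¹)) (x + y0)) :=
    (hm.indicator hSm).comp (by fun_prop : Measurable fun x => x + y0)
  rw [hfub _ hm2]
  have hν2 : inner ℝ e e = (1:ℝ) := by rw [real_inner_self_eq_norm_sq, he]; norm_num
  have e1 : ∀ (t : ℝ) z, inner ℝ e (t • e + ι z + y0 - y0) = t := by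
    intro t z
    rw [add_sub_cancel_right, inner_add_right, inner_smul_right, hν2, hνι]; ring
  have e2 : ∀ (t : ℝ) z, κ (t • e + ι z + y0 - y0) = z := by
    intro t z
    rw [add_sub_cancel_right, map_add, map_smul, hκν, hκι]; simp
  have key : ∀ z (t : ℝ), S.indicator
      (fun x => ENNReal.ofReal ((inner ℝ e (x - y0))⁻¹)) (t • e + ι z + y0) =
      (closedBall (0 : Fin m → ℝ) ρ).indicator 1 z *
        (Icc a b).indicator (fun t => ENNReal.ofReal (t⁻¹)) t := by
    intro z t
    by_cases hz : ‖z‖ ≤ ρ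
    · rw [indicator_of_mem (mem_closedBall_zero_iff.2 hz)]
      by_cases ht : t ∈ Icc a b
      · rw [indicator_of_mem ht, indicator_of_mem]
        · rw [e1]; simp
        · rw [hS, mem_box, e1, e2]; exact ⟨ht, hz⟩
      · rw [indicator_of_notMem ht, indicator_of_notMem]
        · simp
        · rw [hS, mem_box, e1, e2]; exact fun h => ht h.1
    · rw [indicator_of_notMem (show z ∉ closedBall (0 : Fin m → ℝ) ρ by rwa [mem_closedBall_zero_iff]), indicator_of_notMem]
      · simp
      · rw [hS, mem_box, e1, e2]; exact fun h => hz h.2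
  simp_rw [key]
  have hmI : Measurable ((Icc a b).indicator (fun t => ENNReal.ofReal (t⁻¹))) :=
    Measurable.indicator (by fun_prop) measurableSet_Icc
  have : ∀ z, (∫⁻ t : ℝ, (closedBall (0 : Fin m → ℝ) ρ).indicator 1 z *
        (Icc a b).indicator (fun t => ENNReal.ofReal (t⁻¹)) t) =
      (closedBall (0 : Fin m → ℝ) ρ).indicator 1 z * ENNReal.ofReal (Real.log (b/a)) := by
    intro z
    rw [lintegral_const_mul _ hmI, lintegral_indicator measurableSet_Icc, inv_int ha hab]
  simp_rw [this]
  rw [lintegral_mul_const _ (measurable_one.indicator measurableSet_closedBall),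
    lintegral_indicator_one measurableSet_closedBall, Real.volume_pi_closedBall _ hρ, mul_comm]
  simp



/-- The logarithmic rescaling of the half space coordinates. -/
def Phi {m : ℕ} (e y0 : EuclideanSpace ℝ (Fin (m+1)))
    (κ : EuclideanSpace ℝ (Fin (m+1)) →L[ℝ] (Fin m → ℝ)) (l N : ℝ)
    (x : EuclideanSpace ℝ (Fin (m+1))) : ℝ × (Fin m → ℝ) :=
  (N⁻¹ * (Real.log (inner ℝ e (x - y0)) - Real.log l), (l * (N * Real.exp (2*N)))⁻¹ • κ (x - y0))

/-- The test function. -/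
def tst {m : ℕ} (p : ℝ) (e y0 : EuclideanSpace ℝ (Fin (m+1)))
    (κ : EuclideanSpace ℝ (Fin (m+1)) →L[ℝ] (Fin m → ℝ)) (l N : ℝ)
    (θ : ℝ × (Fin m → ℝ) → ℝ) (x : EuclideanSpace ℝ (Fin (m+1))) : ℝ :=
  (max (inner ℝ e (x - y0)) 0) ^ ((p-1)/p) * θ (Phi e y0 κ l N x)

/-- The box of parameter `a`. -/
def bx {m : ℕ} (e y0 : EuclideanSpace ℝ (Fin (m+1)))
    (κ : EuclideanSpace ℝ (Fin (m+1)) →L[ℝ] (Fin m → ℝ)) (l N a : ℝ) :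
    Set (EuclideanSpace ℝ (Fin (m+1))) :=
  box e y0 κ (l * Real.exp (-(a*N))) (l * Real.exp (a*N)) (a * (l * (N * Real.exp (2*N))))

section
variable {m : ℕ} {p : ℝ} {e y0 : EuclideanSpace ℝ (Fin (m+1))}
    {κ : EuclideanSpace ℝ (Fin (m+1)) →L[ℝ] (Fin m → ℝ)} {l N : ℝ}
    {θ : ℝ × (Fin m → ℝ) → ℝ}

lemma mem_bx (hl : 0 < l) (hN : 0 < N) (a : ℝ) {x : EuclideanSpace ℝ (Fin (m+1))}
    (ht : 0 < inner ℝ e (x - y0)) :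
    x ∈ bx e y0 κ l N a ↔ ‖Phi e y0 κ l N x‖ ≤ a := by
  set t := inner ℝ e (x - y0) with htd
  unfold bx Phi
  rw [mem_box, ← htd, Prod.norm_def, max_le_iff]
  simp only
  have hR : 0 < l * (N * Real.exp (2*N)) := by positivity
  refine and_congr ?_ ?_
  · rw [Real.norm_eq_abs, abs_le]
    refine and_congr ?_ ?_
    · rw [← Real.log_le_log_iff (by positivity) ht, Real.log_mul hl.ne' (Real.exp_pos _).ne',
        Real.log_exp, ← sub_nonneg, ← sub_nonneg (b := -a)]
      have : N⁻¹ * (Real.log t - Real.log l) - -a =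
        N⁻¹ * (Real.log t - (Real.log l + -(a*N))) := by field_simp; ring
      rw [this, mul_nonneg_iff_of_pos_left (by positivity)]
    · rw [← Real.log_le_log_iff ht (by positivity), Real.log_mul hl.ne' (Real.exp_pos _).ne',
        Real.log_exp, ← sub_nonneg, ← sub_nonneg (a := a)]
      have : a - N⁻¹ * (Real.log t - Real.log l) =
        N⁻¹ * (Real.log l + (a*N) - Real.log t) := by field_simp; ring
      rw [this, mul_nonneg_iff_of_pos_left (by positivity)]
  · rw [norm_smul, norm_inv, Real.norm_of_nonneg hR.le, inv_mul_le_iff₀ hR, mul_comm a]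

lemma bx_pos (hl : 0 < l) {a : ℝ} {x : EuclideanSpace ℝ (Fin (m+1))}
    (hx : x ∈ bx e y0 κ l N a) : 0 < inner ℝ e (x - y0) := by
  have := hx.1.1
  have h2 : 0 < l * Real.exp (-(a*N)) := by positivity
  linarith

lemma tst_zero (hp : 1 < p) (hl : 0 < l) (hN : 0 < N) (hθ2 : ∀ q, 2 ≤ ‖q‖ → θ q = 0)
    {x : EuclideanSpace ℝ (Fin (m+1))} (hx : x ∉ bx e y0 κ l N 2) : tst p e y0 κ l N θ x = 0 := by
  unfold tst
  rcases le_or_gt (inner ℝ e (x - y0)) 0 with h | h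
  · rw [max_eq_right h, Real.zero_rpow (div_pos (by linarith) (by linarith)).ne', zero_mul]
  · rw [mem_bx hl hN 2 h] at hx
    rw [hθ2 _ (not_le.1 hx).le, mul_zero]

lemma tst_deriv (hl : 0 < l) (hN : 0 < N) (he : ‖e‖ = 1) (hp : 1 < p)
    (hκ : ∀ x, ‖κ x‖ ≤ ‖x‖) (hθ : Differentiable ℝ θ) (hθ0 : ∀ q, 0 ≤ θ q)
    {M : ℝ} (hM : ∀ q, ‖fderiv ℝ θ q‖ ≤ M)
    {x : EuclideanSpace ℝ (Fin (m+1))} (ht : 0 < inner ℝ e (x - y0)) :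
    DifferentiableAt ℝ (tst p e y0 κ l N θ) x ∧ (inner ℝ e (x - y0) ≤ l * Real.exp (2*N) →
      ‖fderiv ℝ (tst p e y0 κ l N θ) x‖ ≤ (inner ℝ e (x - y0)) ^ ((p-1)/p - 1) *
        ((p-1)/p * θ (Phi e y0 κ l N x) + M / N)) := by
  set t := inner ℝ e (x - y0) with htd
  set c := (p-1)/p with hc
  have hc0 : 0 < c := div_pos (by linarith) (by linarith)
  have hT : HasFDerivAt (fun x => inner ℝ e (x - y0)) (innerSL ℝ e) x := by
    have := ((innerSL ℝ e).hasFDerivAt (x := x - y0)).comp x ((hasFDerivAt_id x).sub_const y0)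
    exact this
  have hK : HasFDerivAt (fun x => κ (x - y0)) κ x := by
    have := (κ.hasFDerivAt (x := x - y0)).comp x ((hasFDerivAt_id x).sub_const y0)
    exact this
  have hP : HasFDerivAt (Phi e y0 κ l N)
      ((N⁻¹ • (t⁻¹ • innerSL ℝ e)).prod ((l * (N * Real.exp (2*N)))⁻¹ • κ)) x := by
    have h1 := ((hT.log ht.ne').sub_const (Real.log l)).const_mul N⁻¹
    exact h1.prodMk (hK.const_smul ((l * (N * Real.exp (2*N)))⁻¹))
  have hθP := (hθ (Phi e y0 κ l N x)).hasFDerivAt.comp x hP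
  have hpow := hT.rpow_const (p := c) (Or.inl ht.ne')
  have hev : tst p e y0 κ l N θ =ᶠ[𝓝 x]
      fun x => (inner ℝ e (x - y0))^c * (θ ∘ Phi e y0 κ l N) x := by
    have : ∀ᶠ y in 𝓝 x, 0 < inner ℝ e (y - y0) :=
      (hT.continuousAt).eventually (lt_mem_nhds ht)
    filter_upwards [this] with y hy
    simp only [tst, Function.comp, ← hc]
    rw [max_eq_left hy.le]
  have hfin := (hpow.mul hθP).congr_of_eventuallyEq hev
  refine ⟨hfin.differentiableAt, fun hle => ?_⟩
  rw [hfin.fderiv]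
  have hM0 : 0 ≤ M := (norm_nonneg _).trans (hM 0)
  have hb1 : ‖((N⁻¹ • (t⁻¹ • innerSL ℝ e)).prod ((l * (N * Real.exp (2*N)))⁻¹ • κ) :
      EuclideanSpace ℝ (Fin (m+1)) →L[ℝ] ℝ × (Fin m → ℝ))‖ ≤ N⁻¹ * t⁻¹ := by
    refine ContinuousLinearMap.opNorm_le_bound _ (by positivity) fun h => ?_
    rw [ContinuousLinearMap.prod_apply, Prod.norm_def, max_le_iff]
    constructor
    · simp only [smul_apply, innerSL_apply_apply, smul_eq_mul]
      rw [norm_mul, norm_mul, Real.norm_of_nonneg (by positivity : 0 ≤ N⁻¹),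
        Real.norm_of_nonneg (by positivity : 0 ≤ t⁻¹), ← mul_assoc]
      refine mul_le_mul_of_nonneg_left ?_ (by positivity)
      have := norm_inner_le_norm (𝕜 := ℝ) e h
      rwa [he, one_mul] at this
    · simp only [smul_apply]
      rw [norm_smul, norm_inv, Real.norm_of_nonneg (by positivity)]
      refine mul_le_mul ?_ (hκ h) (norm_nonneg _) (by positivity)
      rw [← mul_inv]
      refine inv_anti₀ (by positivity) ?_
      nlinarith
  have hb2 : ‖(fderiv ℝ θ (Phi e y0 κ l N x)).comp
      ((N⁻¹ • (t⁻¹ • innerSL ℝ e)).prod ((l * (N * Real.exp (2*N)))⁻¹ • κ))‖ ≤ M * (N⁻¹ * t⁻¹) :=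
    (ContinuousLinearMap.opNorm_comp_le _ _).trans (mul_le_mul (hM _) hb1 (norm_nonneg _) hM0)
  have htc : t ^ (c-1) = t^c * t⁻¹ := by rw [Real.rpow_sub_one ht.ne', div_eq_mul_inv]
  refine (norm_add_le _ _).trans ?_
  rw [norm_smul, norm_smul, norm_smul, innerSL_apply_norm, he, mul_one, ← htd,
    Real.norm_of_nonneg (by positivity : 0 ≤ t^c), Real.norm_of_nonneg (by positivity : 0 ≤ c * t^(c-1)),
    Function.comp_apply, Real.norm_of_nonneg (hθ0 _)]
  have : t^c * ‖(fderiv ℝ θ (Phi e y0 κ l N x)).comp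
      ((N⁻¹ • (t⁻¹ • innerSL ℝ e)).prod ((l * (N * Real.exp (2*N)))⁻¹ • κ))‖ ≤
      t^c * (M * (N⁻¹ * t⁻¹)) := mul_le_mul_of_nonneg_left hb2 (by positivity)
  refine (add_le_add_left this _).trans (le_of_eq ?_)
  rw [htc]
  ring

end



lemma upper_core {m : ℕ} {p : ℝ} (hp : 1 < p) {σ : ℝ} (hσ : 0 < σ)
    {Ω : Set (EuclideanSpace ℝ (Fin (m+1)))}
    (hΩ : IsOpen Ω) (hbd : IsBounded Ω)
    {e y0 : EuclideanSpace ℝ (Fin (m+1))} (he : ‖e‖ = 1)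
    (hpos : ∀ x ∈ Ω, 0 < inner ℝ e (x - y0)) (hδ : ∀ x ∈ Ω, sdist Ω x ≤ inner ℝ e (x - y0))
    {κ : EuclideanSpace ℝ (Fin (m+1)) →L[ℝ] (Fin m → ℝ)}
    {ι : (Fin m → ℝ) →L[ℝ] EuclideanSpace ℝ (Fin (m+1))}
    (hκ : ∀ x, ‖κ x‖ ≤ ‖x‖)
    (hκι : ∀ z, κ (ι z) = z) (hκν : κ e = 0) (hνι : ∀ z, inner ℝ e (ι z) = (0:ℝ))
    (hfub : ∀ G : EuclideanSpace ℝ (Fin (m+1)) → ℝ≥0∞, Measurable G →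
      ∫⁻ x, G x = ∫⁻ z, ∫⁻ t : ℝ, G (t • e + ι z))
    {l N : ℝ} (hl : 0 < l) (hN : 0 < N) {θ : ℝ × (Fin m → ℝ) → ℝ}
    (hθ : Differentiable ℝ θ) (hθ0 : ∀ q, 0 ≤ θ q) (hθ1 : ∀ q, θ q ≤ 1)
    (hθi : ∀ q, ‖q‖ ≤ 1 → θ q = 1) (hθ2 : ∀ q, 2 ≤ ‖q‖ → θ q = 0)
    {M : ℝ} (hM : ∀ q, ‖fderiv ℝ θ q‖ ≤ M) (hS : bx e y0 κ l N 2 ⊆ Ω) :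
    lamC p Ω σ ≤ ENNReal.ofReal (((p-1)/p + M/N * ((2:ℝ)^(m+1))^(1/p))^p *
      (1 + alphaC p σ / (l * Real.exp (-(2*N))))^p) := by
  have hp0 : 0 < p := by linarith
  have hα := alphaC_pos hp hσ
  set α := alphaC p σ with hαd
  set c := (p-1)/p with hc
  have hc0 : 0 < c := div_pos (by linarith) hp0
  have hcp : (c - 1) * p = -1 := by rw [hc]; field_simp; ring
  have hM0 : 0 ≤ M := (norm_nonneg _).trans (hM 0)
  set S := bx e y0 κ l N 2 with hSd
  have hScl : IsClosed S := isClosed_box _ _ _ _ _ _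
  have hSm : MeasurableSet S := hScl.measurableSet
  set u := tst p e y0 κ l N θ with hu
  let t : EuclideanSpace ℝ (Fin (m+1)) → ℝ := fun x => inner ℝ e (x - y0)
  have htm : Measurable t := by simp only [t]; fun_prop
  let q : EuclideanSpace ℝ (Fin (m+1)) → ℝ := fun x => θ (Phi e y0 κ l N x)
  have hqm : Measurable q := by
    refine hθ.continuous.measurable.comp ?_
    unfold Phi
    refine Measurable.prodMk ?_ (by fun_prop)
    have := Real.measurable_log.comp htm
    exact (this.sub_const _).const_mul _
  have htS : ∀ x ∈ S, 0 < t x := fun x hx => bx_pos hl hx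
  have huz : ∀ x, x ∉ S → u x = 0 := fun x hx => tst_zero hp hl hN hθ2 hx
  have huev : ∀ x, x ∉ S → u =ᶠ[𝓝 x] fun _ => 0 := by
    intro x hx
    filter_upwards [hScl.isOpen_compl.mem_nhds hx] with y hy using huz y hy
  have hudiff : ∀ x ∈ Ω, DifferentiableAt ℝ u x := fun x hx =>
    (tst_deriv hl hN he hp hκ hθ hθ0 hM (hpos x hx)).1
  have hucont : ContinuousOn u (closure Ω) := by
    intro x _
    by_cases hx : x ∈ S
    · exact (hudiff x (hS hx)).continuousAt.continuousWithinAt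
    · exact (continuousAt_const.congr (huev x hx).symm).continuousWithinAt
  have hgrad : ∀ x ∈ S, ‖fderiv ℝ u x‖ ≤ t x ^ (c-1) * (c * q x + M/N) := fun x hx =>
    (tst_deriv hl hN he hp hκ hθ hθ0 hM (htS x hx)).2 hx.1.2
  have hgrad0 : ∀ x, x ∉ S → fderiv ℝ u x = 0 := by
    intro x hx
    rw [(huev x hx).fderiv_eq]; simp
  -- the basic integral
  set W := ∫⁻ x in S, ENNReal.ofReal ((t x)⁻¹ * q x ^ p) with hW
  have hI : ∀ a : ℝ, 0 ≤ a → ∫⁻ x in bx e y0 κ l N a, ENNReal.ofReal ((t x)⁻¹) =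
      ENNReal.ofReal (2*(a*N)) * ENNReal.ofReal ((2*(a * (l * (N * Real.exp (2*N)))))^m) := by
    intro a ha
    have h1 : l * Real.exp (-(a*N)) ≤ l * Real.exp (a*N) := by
      refine mul_le_mul_of_nonneg_left (Real.exp_le_exp.2 ?_) hl.le
      have : 0 ≤ a * N := by positivity
      linarith
    have := boxint (y0 := y0) he hκι hκν hνι hfub (a := l * Real.exp (-(a*N))) (b := l * Real.exp (a*N))
      (ρ := a * (l * (N * Real.exp (2*N)))) (by positivity) h1 (by positivity)
    unfold bx
    rw [this]
    congr 2
    rw [mul_div_mul_left _ _ hl.ne', ← Real.exp_sub, Real.log_exp]; ring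
  have hI1 := hI 1 (by norm_num)
  have hI2 := hI 2 (by norm_num)
  have hWlow : ∫⁻ x in bx e y0 κ l N 1, ENNReal.ofReal ((t x)⁻¹) ≤ W := by
    have hsub : bx e y0 κ l N 1 ⊆ S := by
      intro x hx
      have h0 := bx_pos hl hx
      rw [hSd, mem_bx hl hN 2 h0]
      rw [mem_bx hl hN 1 h0] at hx
      linarith
    refine le_trans ?_ (lintegral_mono_set hsub)
    refine setLIntegral_mono' (isClosed_box _ _ _ _ _ _).measurableSet fun x hx => ?_
    have h0 := bx_pos hl hx
    have hx' := (mem_bx hl hN 1 h0).1 hx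
    simp only [q]
    rw [hθi _ hx', Real.one_rpow, mul_one]
  have hWS : ∫⁻ x in S, ENNReal.ofReal ((t x)⁻¹) ≤ ENNReal.ofReal ((2:ℝ)^(m+1)) * W := by
    refine le_trans (le_of_eq ?_) (mul_le_mul' le_rfl hWlow)
    rw [hI1, hSd, hI2, ← ENNReal.ofReal_mul (by positivity), ← ENNReal.ofReal_mul (by positivity),
      ← ENNReal.ofReal_mul (by positivity)]
    congr 1
    rw [pow_succ, show 2 * (2 * (l * (N * Real.exp (2*N)))) =
      2 * (2 * (1 * (l * (N * Real.exp (2*N))))) by ring, mul_pow 2 (2 * (1 * (l * (N * Real.exp (2*N)))))]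
    ring
  have hW0 : W ≠ 0 := by
    intro h
    rw [h, hI1, nonpos_iff_eq_zero, mul_eq_zero, ENNReal.ofReal_eq_zero, ENNReal.ofReal_eq_zero] at hWlow
    rcases hWlow with h1 | h1
    · linarith
    · have : 0 < (2*(1 * (l * (N * Real.exp (2*N)))))^m := by positivity
      linarith
  have hWt : W ≠ ∞ := by
    have h1 : W ≤ ∫⁻ x in S, ENNReal.ofReal ((t x)⁻¹) := by
      refine setLIntegral_mono' hSm fun x hx => ENNReal.ofReal_le_ofReal ?_
      have h2 : q x ^ p ≤ 1 := Real.rpow_le_one (hθ0 _) (hθ1 _) hp0.le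
      have h3 := inv_pos.2 (htS x hx)
      exact mul_le_of_le_one_right h3.le h2
    refine ne_top_of_le_ne_top ?_ h1
    rw [hSd, hI2]
    exact ENNReal.mul_ne_top ENNReal.ofReal_ne_top ENNReal.ofReal_ne_top
  -- gradient
  set A := c + M/N * ((2:ℝ)^(m+1))^(1/p) with hA
  have hA0 : 0 ≤ A := by positivity
  have hG : ∫⁻ x in Ω, ENNReal.ofReal (‖fderiv ℝ u x‖^p) ≤ ENNReal.ofReal (A^p) * W := by
    let f : EuclideanSpace ℝ (Fin (m+1)) → ℝ≥0∞ := fun x => ENNReal.ofReal (t x ^ (c-1) * (c * q x))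
    let g : EuclideanSpace ℝ (Fin (m+1)) → ℝ≥0∞ := fun x => ENNReal.ofReal (t x ^ (c-1) * (M/N))
    have hfm : Measurable f := by simp only [f]; fun_prop
    have hgm : Measurable g := by simp only [g]; fun_prop
    have hX : ∫⁻ x in Ω, ENNReal.ofReal (‖fderiv ℝ u x‖^p) ≤ ∫⁻ x in S, ((f + g) x)^p := by
      rw [← lintegral_indicator hΩ.measurableSet, ← lintegral_indicator hSm]
      refine lintegral_mono fun x => ?_
      by_cases hx : x ∈ S
      · rw [indicator_of_mem hx, indicator_of_mem (hS hx), Pi.add_apply]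
        have h0 := htS x hx
        have h1 : 0 ≤ q x := hθ0 _
        simp only [f, g]
        rw [← ENNReal.ofReal_add (by positivity) (by positivity), ← mul_add,
          ENNReal.ofReal_rpow_of_nonneg (by positivity) hp0.le]
        exact ENNReal.ofReal_le_ofReal (Real.rpow_le_rpow (norm_nonneg _) (hgrad x hx) hp0.le)
      · rw [indicator_of_notMem hx]
        by_cases hx' : x ∈ Ω
        · rw [indicator_of_mem hx', hgrad0 x hx, norm_zero, Real.zero_rpow hp0.ne']; simp
        · rw [indicator_of_notMem hx']
    have htp : ∀ x ∈ S, (t x ^ (c-1))^p = (t x)⁻¹ := by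
      intro x hx
      rw [← Real.rpow_mul (htS x hx).le, hcp, Real.rpow_neg_one]
    have hfp : ∫⁻ x in S, f x ^ p ≤ ENNReal.ofReal (c^p) * W := by
      rw [hW, ← lintegral_const_mul' _ _ ENNReal.ofReal_ne_top]
      refine setLIntegral_mono' hSm fun x hx => le_of_eq ?_
      have h0 := htS x hx
      have h1 : 0 ≤ q x := hθ0 _
      simp only [f]
      rw [ENNReal.ofReal_rpow_of_nonneg (by positivity) hp0.le, ← ENNReal.ofReal_mul (by positivity),
        Real.mul_rpow (by positivity) (by positivity), htp x hx, Real.mul_rpow hc0.le h1]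
      congr 1; ring
    have hgp : ∫⁻ x in S, g x ^ p ≤ ENNReal.ofReal ((M/N)^p) * (ENNReal.ofReal ((2:ℝ)^(m+1)) * W) := by
      refine le_trans ?_ (mul_le_mul' le_rfl hWS)
      rw [← lintegral_const_mul' _ _ ENNReal.ofReal_ne_top]
      refine setLIntegral_mono' hSm fun x hx => le_of_eq ?_
      have h0 := htS x hx
      simp only [g]
      rw [ENNReal.ofReal_rpow_of_nonneg (by positivity) hp0.le, ← ENNReal.ofReal_mul (by positivity),
        Real.mul_rpow (by positivity) (by positivity), htp x hx]
      congr 1; ring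
    have hmink := ENNReal.lintegral_Lp_add_le (μ := volume.restrict S) hfm.aemeasurable
      hgm.aemeasurable hp.le
    have h1p : 0 ≤ 1/p := by positivity
    have hb1 : (∫⁻ x in S, f x ^ p)^(1/p) ≤ ENNReal.ofReal c * W^(1/p) := by
      refine (ENNReal.rpow_le_rpow hfp h1p).trans (le_of_eq ?_)
      rw [ENNReal.mul_rpow_of_nonneg _ _ h1p, ENNReal.ofReal_rpow_of_nonneg (by positivity) h1p,
        ← Real.rpow_mul hc0.le, mul_one_div_cancel hp0.ne', Real.rpow_one]
    have hb2 : (∫⁻ x in S, g x ^ p)^(1/p) ≤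
        ENNReal.ofReal (M/N * ((2:ℝ)^(m+1))^(1/p)) * W^(1/p) := by
      refine (ENNReal.rpow_le_rpow hgp h1p).trans (le_of_eq ?_)
      rw [ENNReal.mul_rpow_of_nonneg _ _ h1p, ENNReal.mul_rpow_of_nonneg _ _ h1p,
        ENNReal.ofReal_rpow_of_nonneg (by positivity) h1p,
        ENNReal.ofReal_rpow_of_nonneg (by positivity) h1p,
        ← Real.rpow_mul (by positivity), mul_one_div_cancel hp0.ne', Real.rpow_one, ← mul_assoc,
        ← ENNReal.ofReal_mul (by positivity)]
    have hb3 : (∫⁻ x in S, ((f + g) x)^p)^(1/p) ≤ ENNReal.ofReal A * W^(1/p) := by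
      refine hmink.trans ((add_le_add hb1 hb2).trans (le_of_eq ?_))
      rw [← add_mul, ← ENNReal.ofReal_add hc0.le (by positivity)]
    have hb4 := ENNReal.rpow_le_rpow hb3 hp0.le
    rw [← ENNReal.rpow_mul, one_div_mul_cancel hp0.ne', ENNReal.rpow_one,
      ENNReal.mul_rpow_of_nonneg _ _ hp0.le, ← ENNReal.rpow_mul, one_div_mul_cancel hp0.ne',
      ENNReal.rpow_one, ENNReal.ofReal_rpow_of_nonneg hA0 hp0.le] at hb4
    exact hX.trans hb4
  -- weight
  set t0 := l * Real.exp (-(2*N)) with ht0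
  have ht00 : 0 < t0 := by positivity
  set B := 1 + α / t0 with hB
  have hB0 : 0 < B := by positivity
  have hwt : W ≤ ENNReal.ofReal (B^p) * wnormC p Ω σ u := by
    unfold wnormC
    refine le_trans ?_ (mul_le_mul' le_rfl (lintegral_mono_set hS))
    rw [hW, ← lintegral_const_mul' _ _ ENNReal.ofReal_ne_top]
    refine setLIntegral_mono' hSm fun x hx => ?_
    rw [← ENNReal.ofReal_mul (by positivity)]
    refine ENNReal.ofReal_le_ofReal ?_
    have h0 := htS x hx
    have h1 : 0 ≤ q x := hθ0 _
    have h2 : t0 ≤ t x := hx.1.1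
    have h3 : sdist Ω x ≤ t x := hδ x (hS hx)
    have h4 : 0 ≤ sdist Ω x := infDist_nonneg
    have hux : u x = t x ^ c * q x := by
      rw [hu]; unfold tst
      rw [max_eq_left (show 0 ≤ inner ℝ e (x - y0) from h0.le)]
    rw [← hαd, hux, abs_of_nonneg (by positivity), ← Real.div_rpow (by positivity) (by positivity),
      ← Real.mul_rpow hB0.le (by positivity)]
    have h5 : (t x)⁻¹ = (t x ^ (c-1))^p := by
      rw [← Real.rpow_mul h0.le, hcp, Real.rpow_neg_one]
    rw [h5, ← Real.mul_rpow (by positivity) h1]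
    refine Real.rpow_le_rpow (by positivity) ?_ hp0.le
    have h6 : sdist Ω x + α ≤ t x * B := by
      have : α ≤ t x * (α / t0) := by
        rw [mul_div_assoc', le_div_iff₀ ht00]
        nlinarith
      rw [hB]; nlinarith
    rw [mul_div_assoc', le_div_iff₀ (by positivity)]
    calc t x ^ (c-1) * q x * (sdist Ω x + α) ≤ t x ^ (c-1) * q x * (t x * B) :=
          mul_le_mul_of_nonneg_left h6 (by positivity)
      _ = B * (t x ^ c * q x) := by
          rw [Real.rpow_sub_one h0.ne']; field_simp
  have hw0 : wnormC p Ω σ u ≠ 0 := by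
    intro h
    rw [h, mul_zero, nonpos_iff_eq_zero] at hwt
    exact hW0 hwt
  have hmem : MemW1p p Ω u := by
    refine ⟨hucont, hudiff, ?_, ?_⟩
    · obtain ⟨C, hC⟩ := (hbd.isCompact_closure).exists_bound_of_continuousOn hucont
      have h1 : ∫⁻ x in Ω, ENNReal.ofReal (|u x|^p) ≤ ∫⁻ x in Ω, ENNReal.ofReal (C^p) := by
        refine setLIntegral_mono' hΩ.measurableSet fun x hx => ENNReal.ofReal_le_ofReal ?_
        exact Real.rpow_le_rpow (abs_nonneg _) (hC x (subset_closure hx)) hp0.le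
      refine ne_top_of_le_ne_top ?_ h1
      rw [setLIntegral_const]
      exact ENNReal.mul_ne_top ENNReal.ofReal_ne_top hbd.measure_lt_top.ne
    · exact ne_top_of_le_ne_top (ENNReal.mul_ne_top ENNReal.ofReal_ne_top hWt) hG
  have hsurf : ∫⁻ y, ENNReal.ofReal (|u y|^p) ∂(surf Ω) = 0 := by
    unfold surf
    have : ∫⁻ y in frontier Ω, ENNReal.ofReal (|u y|^p)
        ∂(Measure.hausdorffMeasure (((m+1:ℕ):ℝ) - 1)) = ∫⁻ y in frontier Ω, 0
        ∂(Measure.hausdorffMeasure (((m+1:ℕ):ℝ) - 1)) := by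
      refine setLIntegral_congr_fun isClosed_frontier.measurableSet fun y hy => ?_
      have hyΩ : y ∉ Ω := by
        rw [hΩ.frontier_eq] at hy; exact hy.2
      rw [huz y fun h => hyΩ (hS h), abs_zero, Real.zero_rpow hp0.ne', ENNReal.ofReal_zero]
    rw [this, lintegral_zero]
  have hQ : QpC p Ω σ u ≤ ENNReal.ofReal (A^p * B^p) * wnormC p Ω σ u := by
    unfold QpC
    rw [hsurf, mul_zero, add_zero, ENNReal.ofReal_mul (by positivity), mul_assoc]
    exact hG.trans (mul_le_mul' le_rfl hwt)
  unfold lamC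
  refine iInf_le_of_le u (iInf_le_of_le hmem (iInf_le_of_le hw0 ?_))
  exact ENNReal.div_le_of_le_mul hQ



lemma alphaC_tendsto {p : ℝ} (hp : 1 < p) : Tendsto (fun σ => alphaC p σ) atTop (𝓝 0) := by
  have h1 : 0 < 1/(p-1) := by apply one_div_pos.2; linarith
  have h2 := (tendsto_rpow_neg_atTop h1).const_mul ((p-1)/p)
  rw [mul_zero] at h2
  have h3 : 1/(1-p) = -(1/(p-1)) := by rw [← neg_sub, div_neg]
  unfold alphaC
  rw [h3]
  exact h2

lemma upper_lam {m : ℕ} {p : ℝ} (hp : 1 < p)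
    {Ω : Set (EuclideanSpace ℝ (Fin (m+1)))}
    (hΩ : IsOpen Ω) (hne : Ω.Nonempty) (hbd : IsBounded Ω) (hconv : Convex ℝ Ω)
    (hC2 : HasC2Boundary Ω) {b : ℝ≥0∞} (hb : ENNReal.ofReal (((p-1)/p)^p) < b) :
    ∀ᶠ σ : ℝ in atTop, lamC p Ω σ < b := by
  have hp0 : 0 < p := by linarith
  obtain ⟨y0, e, he, hpos, hδ, hcpt⟩ := geom hΩ hne hbd hconv hC2
  obtain ⟨κ, ι, hκ, hdec, hκι, hκν, hνι, hfub⟩ := coords e he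
  let θ : ContDiffBump (0 : ℝ × (Fin m → ℝ)) := ⟨1, 2, by norm_num, by norm_num⟩
  have hθc : ContDiff ℝ 1 θ := θ.contDiff
  obtain ⟨M, hM⟩ := (θ.hasCompactSupport.fderiv (𝕜 := ℝ)).exists_bound_of_continuous
    (hθc.continuous_fderiv (by norm_num))
  -- choice of N
  have hN1 : Tendsto (fun N : ℝ => ENNReal.ofReal (((p-1)/p + M/N * ((2:ℝ)^(m+1))^(1/p))^p)) atTop
      (𝓝 (ENNReal.ofReal (((p-1)/p)^p))) := by
    have h1 : Tendsto (fun N : ℝ => M/N) atTop (𝓝 0) := tendsto_const_nhds.div_atTop tendsto_id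
    have h2 := ((h1.mul_const (((2:ℝ)^(m+1))^(1/p))).const_add ((p-1)/p)).rpow_const (p := p)
      (Or.inr hp0.le)
    rw [zero_mul, add_zero] at h2
    exact (ENNReal.continuous_ofReal.tendsto _).comp h2
  obtain ⟨N, hNb, hN⟩ := ((hN1.eventually (gt_mem_nhds hb)).and (eventually_gt_atTop 0)).exists
  -- choice of l
  have hS0 : IsCompact (bx e 0 κ 1 N 2) := by
    refine Metric.isCompact_of_isClosed_isBounded (isClosed_box _ _ _ _ _ _) ?_
    refine isBounded_iff_forall_norm_le.2
      ⟨1 * Real.exp (2*N) + ‖ι‖ * (2 * (1 * (N * Real.exp (2*N)))), fun x hx => ?_⟩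
    have h0 := bx_pos one_pos hx
    obtain ⟨⟨h1, h2⟩, h3⟩ := hx
    rw [sub_zero] at h0 h1 h2 h3
    rw [← hdec x]
    refine (norm_add_le _ _).trans (add_le_add ?_ ?_)
    · rw [norm_smul, he, mul_one, Real.norm_of_nonneg h0.le]; exact h2
    · exact (ι.le_opNorm _).trans (mul_le_mul_of_nonneg_left h3 (norm_nonneg _))
  obtain ⟨l, hlS, hl⟩ := ((hcpt _ hS0 (fun z hz => by
    have := bx_pos one_pos hz
    rwa [sub_zero] at this)).and self_mem_nhdsWithin).exists
  have hl0 : (0:ℝ) < l := hl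
  have hS : bx e y0 κ l N 2 ⊆ Ω := by
    intro x hx
    obtain ⟨⟨h1, h2⟩, h3⟩ := hx
    have hz : l⁻¹ • (x - y0) ∈ bx e 0 κ 1 N 2 := by
      refine ⟨⟨?_, ?_⟩, ?_⟩
      · rw [sub_zero, inner_smul_right, le_inv_mul_iff₀ hl0, one_mul]; exact h1
      · rw [sub_zero, inner_smul_right, inv_mul_le_iff₀ hl0, one_mul]; exact h2
      · rw [sub_zero, map_smul, norm_smul, norm_inv, Real.norm_of_nonneg hl0.le,
          inv_mul_le_iff₀ hl0]
        linarith
    have := hlS _ hz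
    rwa [smul_smul, mul_inv_cancel₀ hl0.ne', one_smul, add_sub_cancel] at this
  have hlim : Tendsto (fun σ : ℝ => ENNReal.ofReal (((p-1)/p + M/N * ((2:ℝ)^(m+1))^(1/p))^p *
      (1 + alphaC p σ / (l * Real.exp (-(2*N))))^p)) atTop
      (𝓝 (ENNReal.ofReal (((p-1)/p + M/N * ((2:ℝ)^(m+1))^(1/p))^p))) := by
    have h2 := ((((alphaC_tendsto hp).div_const (l * Real.exp (-(2*N)))).const_add 1).rpow_const
      (p := p) (Or.inr hp0.le)).const_mul (((p-1)/p + M/N * ((2:ℝ)^(m+1))^(1/p))^p)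
    rw [zero_div, add_zero, Real.one_rpow, mul_one] at h2
    exact (ENNReal.continuous_ofReal.tendsto _).comp h2
  filter_upwards [hlim.eventually (gt_mem_nhds hNb), eventually_gt_atTop 0] with σ hσb hσ
  refine lt_of_le_of_lt (upper_core (θ := θ) hp hσ hΩ hbd he hpos hδ hκ hκι hκν hνι hfub hl0 hN
    (hθc.differentiable (by norm_num)) (fun q => θ.nonneg) (fun q => θ.le_one)
    (fun q hq => θ.one_of_mem_closedBall (mem_closedBall_zero_iff.2 hq))
    (fun q hq => θ.zero_of_le_dist (by rwa [dist_zero_right])) hM hS) hσb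

theorem lam_tendsto_Cp (n : ℕ) (hn : 1 ≤ n) (p : ℝ) (hp : 1 < p)
    (Ω : Set (EuclideanSpace ℝ (Fin n))) (hΩ : IsOpen Ω) (hne : Ω.Nonempty)
    (hbd : IsBounded Ω) (hconv : Convex ℝ Ω) (hC2 : HasC2Boundary Ω) :
    Tendsto (fun σ : ℝ => lamC p Ω σ) atTop
      (𝓝 (ENNReal.ofReal (((p - 1) / p) ^ p))) := by
  obtain ⟨m, rfl⟩ : ∃ m, n = m + 1 := ⟨n - 1, by omega⟩
  refine tendsto_order.2 ⟨fun a ha => ?_, fun b hb => upper_lam hp hΩ hne hbd hconv hC2 hb⟩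
  filter_upwards [eventually_gt_atTop 0] with σ hσ
  exact lt_of_lt_of_le ha (lower_lam hp hσ hΩ hne hbd hconv)


end RobinHardy
end
end
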